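/- arXiv:1403.6539 — 3 statements merged into one kernel-verified Lean document; each statement's English description precedes it below -/
import Mathlib

section
/- The Gelfand-Kirillov dimension of the down-up algebra A(α,β,φ) over K[t₁,…,tₙ] equals n+3. -/
open MvPolynomial

namespace DownUp

inductive Gen | u | d

variable {K : Type} [Field K] {n : ℕ}

/-- Free algebra over the polynomial base ring on generators u, d. -/
abbrev F (K : Type) [Field K] (n : ℕ) := FreeAlgebra (MvPolynomial (Fin n) K) Gen

noncomputable def uF : F K n := FreeAlgebra.ι _ Gen.u
noncomputable def dF : F K n := FreeAlgebra.ι _ Gen.d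

/-- The defining relations of the down-up algebra over K[t₁,…,tₙ]. -/
inductive Rel (α β : K) (φ : MvPolynomial (Fin n) K) : F K n → F K n → Prop
  | ddu : Rel α β φ (dF * dF * uF)
      (α • (dF * uF * dF) + β • (uF * dF * dF) + algebraMap _ _ φ * dF)
  | duu : Rel α β φ (dF * uF * uF)
      (α • (uF * dF * uF) + β • (uF * uF * dF) + uF * algebraMap _ _ φ)

/-- The down-up algebra A(α,β,φ) over K[t₁,…,tₙ]. -/
abbrev A (α β : K) (φ : MvPolynomial (Fin n) K) := RingQuot (Rel α β φ)

noncomputable def U (α β : K) (φ : MvPolynomial (Fin n) K) : A α β φ :=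
  RingQuot.mkAlgHom K _ uF
noncomputable def D (α β : K) (φ : MvPolynomial (Fin n) K) : A α β φ :=
  RingQuot.mkAlgHom K _ dF

/-- Image of the base polynomial ring in A. -/
noncomputable def T (α β : K) (φ : MvPolynomial (Fin n) K) :
    MvPolynomial (Fin n) K →ₐ[K] A α β φ :=
  (RingQuot.mkAlgHom K (Rel α β φ)).comp (IsScalarTower.toAlgHom K (MvPolynomial (Fin n) K) (F K n))

end DownUp
open scoped ENNReal

/-- The Gelfand–Kirillov dimension of a K-algebra: the supremum over all
finite-dimensional subspaces `V` of `limsup_m log_m dim(∑_{i≤m} Vⁱ)`. -/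
noncomputable def gkDim (K A' : Type) [Field K] [Ring A'] [Algebra K A'] : ℝ≥0∞ :=
  ⨆ V : {V : Submodule K A' // FiniteDimensional K V},
    Filter.limsup
      (fun m : ℕ => ENNReal.ofReal
        (Real.logb m
          (Module.finrank K ((Finset.range (m + 1)).sum (fun i => V.1 ^ i) : Submodule K A'))))
      Filter.atTop

/-!
Write the relations as `d(du) = τd` and `(du)u = uτ` with `τ = α du + β ud + φ`. The monomials
`tᵃuⁱ(du)ʲdᵏ` form a basis of the algebra. They are independent because the algebra acts on the free
module over `K[t₁,…,tₙ][z]` with basis `uⁱ(du)ʲ`, `d` acting on the generator by `z`, and the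
monomials send the generator to distinct members of a `K`-basis. They span because the relations do
not increase the weight in which each `tₗ` has weight `1` and `u`, `d` both have weight
`deg φ + 1`. Hence the filtration by weight is multiplicative, and its `m`-th step lies in the span
of the monomials with all `n + 3` exponents at most `m`, which bounds the dimension above; below it
is bounded because the monomials of total degree at most `m` lie in the `m`-th power of the span of
`1` and the letters `tₗ`, `u`, `du`, `d`.
-/

section Growth

open Filter Finset

lemma tendsto_ofReal_logb_const_mul_pow {C : ℝ} (hC : 0 < C) (N : ℕ) :
    Tendsto (fun m : ℕ => ENNReal.ofReal (Real.logb m (C * (m : ℝ) ^ N))) atTop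
      (nhds (N : ℝ≥0∞)) := by
  rw [← ENNReal.ofReal_natCast]
  refine (ENNReal.continuous_ofReal.tendsto _).comp ?_
  have hlog : Tendsto (fun m : ℕ => Real.log C / Real.log m + N) atTop (nhds (0 + N)) :=
    ((Real.tendsto_log_atTop.comp tendsto_natCast_atTop_atTop).const_div_atTop _).add_const _
  rw [zero_add] at hlog
  refine hlog.congr' ?_
  filter_upwards [eventually_gt_atTop 1] with m hm
  have hlog_pos : 0 < Real.log m := Real.log_pos (mod_cast hm)
  rw [Real.logb, Real.log_mul hC.ne' (by positivity), Real.log_pow]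
  field_simp

lemma limsup_ofReal_logb_le {f : ℕ → ℕ} {C : ℝ} (hC : 0 < C) {N : ℕ}
    (hf : ∀ᶠ m : ℕ in atTop, (f m : ℝ) ≤ C * (m : ℝ) ^ N) :
    limsup (fun m : ℕ => ENNReal.ofReal (Real.logb m (f m))) atTop ≤ N := by
  rw [← (tendsto_ofReal_logb_const_mul_pow hC N).limsup_eq]
  refine limsup_le_limsup ?_
  filter_upwards [hf, eventually_gt_atTop 1] with m hfm hm
  rcases Nat.eq_zero_or_pos (f m) with hzero | hpos
  · simp [hzero]
  · exact ENNReal.ofReal_le_ofReal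
      (Real.logb_le_logb_of_le (mod_cast hm) (mod_cast hpos) hfm)

lemma le_limsup_ofReal_logb {f : ℕ → ℕ} {C : ℝ} (hC : 0 < C) {N : ℕ}
    (hf : ∀ᶠ m : ℕ in atTop, C * (m : ℝ) ^ N ≤ f m) :
    N ≤ limsup (fun m : ℕ => ENNReal.ofReal (Real.logb m (f m))) atTop := by
  rw [← (tendsto_ofReal_logb_const_mul_pow hC N).limsup_eq]
  refine limsup_le_limsup ?_
  filter_upwards [hf, eventually_gt_atTop 1] with m hfm hm
  exact ENNReal.ofReal_le_ofReal (Real.logb_le_logb_of_le (mod_cast hm) (by positivity) hfm)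

section Filtration

variable {R B : Type*} [CommSemiring R] [Semiring B] [Algebra R B]
  {V W : Submodule R B} {H : ℕ → Submodule R B}

lemma pow_le_sum_pow {i m : ℕ} (hi : i ≤ m) : V ^ i ≤ ∑ l ∈ range (m + 1), V ^ l := by
  rw [← add_sum_erase _ _ (mem_range_succ_iff.2 hi), Submodule.add_eq_sup]
  exact le_sup_left

lemma sum_pow_le {m : ℕ} (h : ∀ i ≤ m, V ^ i ≤ W) : ∑ i ∈ range (m + 1), V ^ i ≤ W :=
  sum_induction _ (· ≤ W) (fun _ _ => sup_le) bot_le fun i hi => h i (mem_range_succ_iff.1 hi)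

lemma fg_sum_pow (hV : V.FG) (m : ℕ) : (∑ i ∈ range (m + 1), V ^ i).FG :=
  sum_induction _ Submodule.FG (fun _ _ => Submodule.FG.sup) Submodule.fg_bot
    fun i _ => hV.pow i

lemma pow_le_of_le_gradedMonoid [SetLike.GradedMonoid H] {r : ℕ} (hV : V ≤ H r) (i : ℕ) :
    V ^ i ≤ H (r * i) := by
  induction i with
  | zero =>
    rw [pow_zero, Submodule.one_le]
    exact SetLike.one_mem_graded H
  | succ i ih =>
    rw [pow_succ, Submodule.mul_le]
    exact fun x hx y hy => SetLike.mul_mem_graded (ih hx) (hV hy)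

lemma sum_pow_le_of_le_gradedMonoid [SetLike.GradedMonoid H] (hmono : Monotone H) {r : ℕ}
    (hV : V ≤ H r) (m : ℕ) : ∑ i ∈ range (m + 1), V ^ i ≤ H (r * m) :=
  sum_pow_le fun i hi =>
    (pow_le_of_le_gradedMonoid hV i).trans (hmono (Nat.mul_le_mul_left r hi))

lemma exists_le_of_fg (hmono : Monotone H) (hexhaust : ∀ x, ∃ r, x ∈ H r) (hV : V.FG) :
    ∃ r, V ≤ H r := by
  obtain ⟨S, rfl⟩ := hV
  choose r hr using hexhaust
  exact ⟨S.sup r, Submodule.span_le.2 fun x hx => hmono (le_sup (f := r) hx) (hr x)⟩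

end Filtration

variable {K B : Type} [Field K] [Ring B] [Algebra K B]

section Box

variable {σ : Type*} [Fintype σ]

lemma sum_le_card_mul_of_le_const {m : ℕ} {e : σ → ℕ} (he : e ≤ Function.const σ m) :
    ∑ i, e i ≤ Fintype.card σ * m := by
  simpa using sum_le_card_nsmul univ e m fun i _ => he i

section Module

variable {M : Type*} [AddCommGroup M] [Module K M]

lemma finiteDimensional_span_image_Iic_const {σ : Type*} [Finite σ] (b : (σ → ℕ) → M) (m : ℕ) :
    FiniteDimensional K (Submodule.span K (b '' Set.Iic (Function.const σ m))) := by
  classical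
  have := Fintype.ofFinite σ
  exact FiniteDimensional.span_of_finite K ((Set.finite_Iic _).image b)

lemma finrank_span_image_Iic_const_le (b : (σ → ℕ) → M) (m : ℕ) :
    Module.finrank K (Submodule.span K (b '' Set.Iic (Function.const σ m))) ≤
      (m + 1) ^ Fintype.card σ := by
  classical
  rw [Set.image_eq_range]
  exact (finrank_range_le_card _).trans_eq (by simp [Pi.card_Iic])

lemma finrank_span_image_Iic_const {b : (σ → ℕ) → M} (hb : LinearIndependent K b) (m : ℕ) :
    Module.finrank K (Submodule.span K (b '' Set.Iic (Function.const σ m))) =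
      (m + 1) ^ Fintype.card σ := by
  classical
  have hbox := hb.comp (Subtype.val : Set.Iic (Function.const σ m) → σ → ℕ) Subtype.val_injective
  rw [Set.image_eq_range]
  exact (finrank_span_eq_card hbox).trans (by simp [Pi.card_Iic])

end Module

theorem gkDim_le_card {H : ℕ → Submodule K B} [SetLike.GradedMonoid H] (hmono : Monotone H)
    (hexhaust : ∀ x, ∃ r, x ∈ H r) {b : (σ → ℕ) → B}
    (hspan : ∀ m, H m ≤ Submodule.span K (b '' Set.Iic (Function.const σ m))) :
    gkDim K B ≤ Fintype.card σ := by
  set N := Fintype.card σ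
  refine iSup_le ?_
  rintro ⟨V, hV⟩
  obtain ⟨r, hr⟩ := exists_le_of_fg hmono hexhaust (Module.Finite.iff_fg.1 hV)
  refine limsup_ofReal_logb_le (C := (r + 1 : ℝ) ^ N) (by positivity) ?_
  filter_upwards [eventually_ge_atTop 1] with m hm
  have hgrowth : Module.finrank K (∑ i ∈ range (m + 1), V ^ i : Submodule K B)
      ≤ ((r + 1) * m) ^ N := by
    have := finiteDimensional_span_image_Iic_const (K := K) b (r * m)
    calc Module.finrank K (∑ i ∈ range (m + 1), V ^ i : Submodule K B)
        ≤ Module.finrank K (Submodule.span K (b '' Set.Iic (Function.const σ (r * m)))) :=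
          Submodule.finrank_mono ((sum_pow_le_of_le_gradedMonoid hmono hr m).trans (hspan _))
      _ ≤ (r * m + 1) ^ N := finrank_span_image_Iic_const_le b _
      _ ≤ ((r + 1) * m) ^ N := Nat.pow_le_pow_left (by linarith) N
  rw [← mul_pow]
  exact_mod_cast hgrowth

theorem card_le_gkDim {b : (σ → ℕ) → B} (hb : LinearIndependent K b) {V : Submodule K B}
    (hV : V.FG) (hbV : ∀ e, b e ∈ V ^ ∑ i, e i) :
    (Fintype.card σ : ℝ≥0∞) ≤ gkDim K B := by
  refine le_trans ?_ (le_iSup _ ⟨V, Module.Finite.iff_fg.2 hV⟩)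
  set N := Fintype.card σ
  refine le_limsup_ofReal_logb (C := (1 / (N + 1 : ℝ)) ^ N) (by positivity) (.of_forall fun m => ?_)
  set s := m / (N + 1)
  have hNs : N * s ≤ m := (Nat.mul_le_mul_right s N.le_succ).trans (Nat.mul_div_le m (N + 1))
  have hbox : Submodule.span K (b '' Set.Iic (Function.const σ s)) ≤
      ∑ i ∈ range (m + 1), V ^ i := by
    rw [Submodule.span_le]
    rintro _ ⟨e, he, rfl⟩
    exact pow_le_sum_pow ((sum_le_card_mul_of_le_const he).trans hNs) (hbV e)
  have hgrowth : (s + 1) ^ N ≤ Module.finrank K (∑ i ∈ range (m + 1), V ^ i : Submodule K B) := by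
    have := Module.Finite.iff_fg.2 (fg_sum_pow hV m)
    rw [← finrank_span_image_Iic_const hb]
    exact Submodule.finrank_mono hbox
  have hm : (m : ℝ) / (N + 1) ≤ s + 1 := by
    rw [div_le_iff₀' (by positivity)]
    exact_mod_cast (Nat.lt_mul_div_succ m N.succ_pos).le
  calc (1 / (N + 1 : ℝ)) ^ N * (m : ℝ) ^ N = (m / (N + 1)) ^ N := by rw [← mul_pow]; ring
    _ ≤ (s + 1 : ℝ) ^ N := by gcongr
    _ ≤ _ := by exact_mod_cast hgrowth

end Box

end Growth

namespace DownUp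

section InducedModule

/-- The free module on which the down-up relations are realised, for a scalar `z : S` through which
`d` acts on the generator `vec 0 0`: it is the module induced from the subalgebra generated by `d`,
and its basis vector `vec i j` stands for `uⁱ(du)ʲ` applied to the generator. -/
abbrev InducedModule (S : Type*) [CommRing S] := ℕ × ℕ →₀ S

variable {S : Type*} [CommRing S]

/-- The basis vector of the induced module standing for `uⁱ(du)ʲ`. -/
noncomputable def vec (i j : ℕ) : InducedModule S := Finsupp.single (i, j) 1

lemma hom_ext_vec {M : Type*} [AddCommGroup M] [Module S M] {f g : InducedModule S →ₗ[S] M}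
    (h : ∀ i j, f (vec i j) = g (vec i j)) : f = g :=
  Finsupp.lhom_ext' fun p => LinearMap.ext_ring (h p.1 p.2)

/-- The action of `u` on the induced module. -/
noncomputable def raise : Module.End S (InducedModule S) :=
  Finsupp.lmapDomain S S fun p => (p.1 + 1, p.2)

@[simp] lemma raise_vec (i j : ℕ) : raise (vec i j : InducedModule S) = vec (i + 1) j := by
  simp [raise, vec]

/-- The vectors of the induced module that involve `du` at most `J` times. -/
noncomputable def belowRow (S : Type*) [CommRing S] (J : ℕ) : Submodule S (InducedModule S) :=
  Finsupp.supported S S {p | p.2 ≤ J}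

lemma vec_mem_belowRow {i j J : ℕ} (h : j ≤ J) : (vec i j : InducedModule S) ∈ belowRow S J :=
  Finsupp.single_mem_supported S 1 h

lemma belowRow_mono : Monotone (belowRow S) :=
  fun _ _ h => Finsupp.supported_mono fun _ hp => le_trans hp h

lemma belowRow_le_iff {J : ℕ} {N : Submodule S (InducedModule S)} :
    belowRow S J ≤ N ↔ ∀ i, ∀ j ≤ J, vec i j ∈ N := by
  rw [belowRow, Finsupp.supported_eq_span_single, Submodule.span_le, Set.image_subset_iff]
  exact ⟨fun h i j hj => h (show (i, j) ∈ {p : ℕ × ℕ | p.2 ≤ J} from hj), fun h p hp => h _ _ hp⟩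

lemma raise_mem_belowRow {J : ℕ} {v : InducedModule S} (hv : v ∈ belowRow S J) :
    raise v ∈ belowRow S J :=
  (belowRow_le_iff (N := (belowRow S J).comap raise)).2
    (fun i j hj => by simpa using vec_mem_belowRow hj) hv

variable (α β φ : S)

/-- The vector `d·uⁱ(du)ʲ`, computed from the value `v` of `d·(du)ʲ` by the relation for `du²`. -/
noncomputable def lowerVec (v : InducedModule S) (j : ℕ) : ℕ → InducedModule S
  | 0 => v
  | 1 => vec 0 (j + 1)
  | i + 2 => α • raise (lowerVec v j (i + 1)) + β • raise (raise (lowerVec v j i))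
      + φ • vec (i + 1) j

/-- The operator that maps `(du)ʲ` to `F j` and is extended to `uⁱ(du)ʲ` by the relation for
`du²`. -/
noncomputable def lowerWith (F : ℕ → InducedModule S) : Module.End S (InducedModule S) :=
  Finsupp.linearCombination S fun p => lowerVec α β φ (F p.2) p.2 p.1

@[simp] lemma lowerWith_vec (F : ℕ → InducedModule S) (i j : ℕ) :
    lowerWith α β φ F (vec i j) = lowerVec α β φ (F j) j i := by
  simp [lowerWith, vec]

lemma lowerVec_mem_belowRow {v : InducedModule S} {j : ℕ} (hv : v ∈ belowRow S j) (i : ℕ) :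
    lowerVec α β φ v j i ∈ belowRow S (j + 1) := by
  induction i using Nat.twoStepInduction with
  | zero => exact belowRow_mono j.le_succ hv
  | one => exact vec_mem_belowRow le_rfl
  | more i hi hi' =>
    exact add_mem (add_mem (Submodule.smul_mem _ _ (raise_mem_belowRow hi'))
      (Submodule.smul_mem _ _ (raise_mem_belowRow (raise_mem_belowRow hi))))
      (Submodule.smul_mem _ _ (vec_mem_belowRow j.le_succ))

lemma lowerWith_mem_belowRow {F : ℕ → InducedModule S} {J : ℕ}
    (hF : ∀ j ≤ J, F j ∈ belowRow S j) {v : InducedModule S} (hv : v ∈ belowRow S J) :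
    lowerWith α β φ F v ∈ belowRow S (J + 1) :=
  (belowRow_le_iff (N := (belowRow S (J + 1)).comap (lowerWith α β φ F))).2
    (fun i j hj => by
      simpa using belowRow_mono (Nat.succ_le_succ hj) (lowerVec_mem_belowRow α β φ (hF j hj) i)) hv

lemma lowerWith_congr {F G : ℕ → InducedModule S} {J : ℕ} (h : ∀ j ≤ J, F j = G j)
    {v : InducedModule S} (hv : v ∈ belowRow S J) :
    lowerWith α β φ F v = lowerWith α β φ G v :=
  (belowRow_le_iff (N := LinearMap.eqLocus (lowerWith α β φ F) (lowerWith α β φ G))).2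
    (fun i j hj => by simp [h j hj]) hv

/-- The element `α du + β ud + φ`, in terms of which the down-up relations read
`d(du) = twist · d` and `(du)u = u · twist`. -/
def twist {E : Type*} [Ring E] [Algebra S E] (u d : E) : E :=
  α • (d * u) + β • (u * d) + algebraMap S E φ

lemma twist_algebraMap {S' E : Type*} [CommRing S'] [Ring E] [Algebra S S'] [Algebra S' E]
    [Algebra S E] [IsScalarTower S S' E] (u d : E) :
    twist (algebraMap S S' α) (algebraMap S S' β) (algebraMap S S' φ) u d = twist α β φ u d := by
  simp only [twist, algebraMap_smul, ← IsScalarTower.algebraMap_apply]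

variable (z : S)

/-- The vectors `d·(du)ʲ`, which the relation for `d²u` determines recursively: `seed J` is correct
at all `j ≤ J`, which is all that computing `d·(du)ᴶ⁺¹` takes. -/
noncomputable def seed : ℕ → ℕ → InducedModule S
  | 0 => fun _ => z • vec 0 0
  | J + 1 => Function.update (seed J) (J + 1)
      (twist α β φ raise (lowerWith α β φ (seed J)) (seed J J))

lemma seed_apply_of_le {j J : ℕ} (h : j ≤ J) : seed α β φ z J j = seed α β φ z j j := by
  induction J, h using Nat.le_induction with
  | base => rfl
  | succ J h ih => rw [seed, Function.update_of_ne (by omega), ih]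

/-- The action of `d` on the induced module. -/
noncomputable def lower : Module.End S (InducedModule S) :=
  lowerWith α β φ fun j => seed α β φ z j j

lemma lowerWith_seed_eq_lower {J : ℕ} {v : InducedModule S} (hv : v ∈ belowRow S J) :
    lowerWith α β φ (seed α β φ z J) v = lower α β φ z v :=
  lowerWith_congr α β φ (fun _ hj => seed_apply_of_le α β φ z hj) hv

lemma seed_mem_belowRow (j : ℕ) : seed α β φ z j j ∈ belowRow S j := by
  induction j using Nat.strong_induction_on with
  | _ j ih =>
    cases j with
    | zero => exact Submodule.smul_mem _ _ (vec_mem_belowRow le_rfl)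
    | succ j =>
      have hj := ih j j.lt_succ_self
      have hF : ∀ l ≤ j, seed α β φ z j l ∈ belowRow S l := fun l hl => by
        rw [seed_apply_of_le α β φ z hl]
        exact ih l (Nat.lt_succ_of_le hl)
      rw [seed, Function.update_self]
      exact add_mem (add_mem
        (Submodule.smul_mem _ _ (lowerWith_mem_belowRow α β φ hF (raise_mem_belowRow hj)))
        (Submodule.smul_mem _ _ (raise_mem_belowRow (lowerWith_mem_belowRow α β φ hF hj))))
        (Submodule.smul_mem _ _ (belowRow_mono j.le_succ hj))

@[simp] lemma lower_vec_zero_zero : lower α β φ z (vec 0 0) = z • vec 0 0 := by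
  simp [lower, lowerVec, seed]

@[simp] lemma lower_vec_one (j : ℕ) : lower α β φ z (vec 1 j) = vec 0 (j + 1) := by
  simp [lower, lowerVec]

lemma lower_vec_zero_succ (j : ℕ) :
    lower α β φ z (vec 0 (j + 1)) =
      twist α β φ raise (lower α β φ z) (lower α β φ z (vec 0 j)) := by
  have hj := seed_mem_belowRow α β φ z j
  have hlower (l : ℕ) : lower α β φ z (vec 0 l) = seed α β φ z l l := by simp [lower, lowerVec]
  rw [hlower, hlower, seed, Function.update_self]
  simp [twist, lowerWith_seed_eq_lower α β φ z hj,
    lowerWith_seed_eq_lower α β φ z (raise_mem_belowRow hj)]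

lemma lower_mul_raise_mul_raise :
    lower α β φ z * raise * raise = raise * twist α β φ raise (lower α β φ z) :=
  hom_ext_vec fun i j => by simp [twist, lower, lowerVec]

lemma lower_mul_lower_mul_raise :
    lower α β φ z * lower α β φ z * raise =
      twist α β φ raise (lower α β φ z) * lower α β φ z := by
  set d := lower α β φ z with hd
  refine hom_ext_vec fun i j => ?_
  induction i with
  | zero => simp [hd, lower_vec_zero_succ]
  | succ i ih =>
    have hduu (v : InducedModule S) : d (raise (raise v)) = raise (twist α β φ raise d v) :=
      LinearMap.congr_fun (lower_mul_raise_mul_raise α β φ z) v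
    -- Both ways of reducing `d²u²` agree because `u · d²u = du² · d`.
    have hcomm : d (raise (raise (d (vec i j)))) = raise (d (d (raise (vec i j)))) := by
      rw [hduu]
      exact congrArg raise ih.symm
    rw [← raise_vec]
    simp only [Module.End.mul_apply, hduu (vec i j)]
    simp [twist, hcomm]

end InducedModule

variable {K : Type} [Field K] {n : ℕ} (α β : K) (φ : MvPolynomial (Fin n) K)

local notation "𝐮" => U α β φ
local notation "𝐝" => D α β φ

section Presentation

lemma mkAlgHom_eq_mkAlgHom_base (x : F K n) :
    RingQuot.mkAlgHom K (Rel α β φ) x =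
      RingQuot.mkAlgHom (MvPolynomial (Fin n) K) (Rel α β φ) x :=
  RingHom.congr_fun ((RingQuot.mkAlgHom_coe K _).trans (RingQuot.mkAlgHom_coe _ _).symm) x

lemma mkAlgHom_algebraMap (p : MvPolynomial (Fin n) K) :
    RingQuot.mkAlgHom K (Rel α β φ) (algebraMap _ _ p) = algebraMap _ _ p := by
  rw [mkAlgHom_eq_mkAlgHom_base, AlgHom.commutes]

lemma D_mul_D_mul_U : 𝐝 * 𝐝 * 𝐮 = twist (C α) (C β) φ 𝐮 𝐝 * 𝐝 := by
  have h := RingQuot.mkAlgHom_rel K (Rel.ddu (α := α) (β := β) (φ := φ))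
  simp only [map_mul, map_add, map_smul, mkAlgHom_algebraMap] at h
  simp only [twist, add_mul, ← algebraMap_eq, algebraMap_smul, smul_mul_assoc]
  exact h

lemma D_mul_U_mul_U : 𝐝 * 𝐮 * 𝐮 = 𝐮 * twist (C α) (C β) φ 𝐮 𝐝 := by
  have h := RingQuot.mkAlgHom_rel K (Rel.duu (α := α) (β := β) (φ := φ))
  simp only [map_mul, map_add, map_smul, mkAlgHom_algebraMap] at h
  simp only [twist, mul_add, ← algebraMap_eq, algebraMap_smul, mul_smul_comm, ← mul_assoc]
  exact h

@[elab_as_elim]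
lemma induction_U_D {P : A α β φ → Prop}
    (hbase : ∀ p : MvPolynomial (Fin n) K, P (algebraMap _ _ p))
    (hU : P 𝐮) (hD : P 𝐝) (hadd : ∀ x y, P x → P y → P (x + y))
    (hmul : ∀ x y, P x → P y → P (x * y)) (x : A α β φ) : P x := by
  obtain ⟨f, rfl⟩ := RingQuot.mkAlgHom_surjective K (Rel α β φ) x
  induction f using FreeAlgebra.induction with
  | grade0 p => rw [mkAlgHom_algebraMap]; exact hbase p
  | grade1 g =>
    cases g with
    | u => exact hU
    | d => exact hD
  | mul x y hx hy => rw [map_mul]; exact hmul _ _ hx hy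
  | add x y hx hy => rw [map_add]; exact hadd _ _ hx hy

/-- The universal property of the down-up algebra. -/
noncomputable def lift {E : Type*} [Ring E] [Algebra (MvPolynomial (Fin n) K) E] {u d : E}
    (hddu : d * d * u = twist (C α) (C β) φ u d * d)
    (hduu : d * u * u = u * twist (C α) (C β) φ u d) : A α β φ →ₐ[MvPolynomial (Fin n) K] E :=
  RingQuot.liftAlgHom _ ⟨FreeAlgebra.lift _ fun | .u => u | .d => d, fun x y h => by
    cases h with
    | ddu => simpa [uF, dF, twist, add_mul, ← algebraMap_eq,
        ← algebraMap_smul (MvPolynomial (Fin n) K) (_ : K) (_ : F K n)] using hddu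
    | duu => simpa [uF, dF, twist, mul_add, ← mul_assoc, ← algebraMap_eq,
        ← algebraMap_smul (MvPolynomial (Fin n) K) (_ : K) (_ : F K n)] using hduu⟩

section Lift

variable {E : Type*} [Ring E] [Algebra (MvPolynomial (Fin n) K) E] {u d : E}
  (hddu : d * d * u = twist (C α) (C β) φ u d * d)
  (hduu : d * u * u = u * twist (C α) (C β) φ u d)

@[simp] lemma lift_U : lift α β φ hddu hduu 𝐮 = u := by
  rw [U, mkAlgHom_eq_mkAlgHom_base, lift, RingQuot.liftAlgHom_mkAlgHom_apply, uF,
    FreeAlgebra.lift_ι_apply]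

@[simp] lemma lift_D : lift α β φ hddu hduu 𝐝 = d := by
  rw [D, mkAlgHom_eq_mkAlgHom_base, lift, RingQuot.liftAlgHom_mkAlgHom_apply, dF,
    FreeAlgebra.lift_ι_apply]

end Lift

end Presentation

section Independence

/-- The normal words `uⁱ(du)ʲdᵏ`. -/
noncomputable def word (i j k : ℕ) : A α β φ := 𝐮 ^ i * (𝐝 * 𝐮) ^ j * 𝐝 ^ k

/-- The Poincaré–Birkhoff–Witt monomial `tᵃuⁱ(du)ʲdᵏ`, whose exponents are indexed by the variables
`tₗ` and the three letters `u`, `du`, `d`. -/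
noncomputable def pbw (e : Fin n ⊕ Fin 3 → ℕ) : A α β φ :=
  monomial (Finsupp.equivFunOnFinite.symm (e ∘ Sum.inl)) (1 : K) •
    word α β φ (e (.inr 0)) (e (.inr 1)) (e (.inr 2))

section InducedRep

variable {S : Type*} [CommRing S] [Algebra (MvPolynomial (Fin n) K) S] (z : S)

/-- The action of the down-up algebra on the induced module on whose generator `d` acts by `z`. -/
noncomputable def inducedRep :
    A α β φ →ₐ[MvPolynomial (Fin n) K] Module.End S (InducedModule S) :=
  lift α β φ (u := raise)
    (d := lower (algebraMap _ S (C α)) (algebraMap _ S (C β)) (algebraMap _ S φ) z)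
    ((lower_mul_lower_mul_raise _ _ _ z).trans (by rw [twist_algebraMap]))
    ((lower_mul_raise_mul_raise _ _ _ z).trans (by rw [twist_algebraMap]))

lemma inducedRep_U : inducedRep α β φ z 𝐮 = raise := lift_U ..

lemma inducedRep_D : inducedRep α β φ z 𝐝 =
    lower (algebraMap (MvPolynomial (Fin n) K) S (C α))
      (algebraMap (MvPolynomial (Fin n) K) S (C β)) (algebraMap _ S φ) z := lift_D ..

lemma inducedRep_U_pow_vec (i l j : ℕ) : inducedRep α β φ z (𝐮 ^ i) (vec l j) = vec (l + i) j := by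
  induction i with
  | zero => simp
  | succ i ih =>
    rw [pow_succ', map_mul, Module.End.mul_apply, ih, inducedRep_U, raise_vec, add_assoc]

lemma inducedRep_DU_pow_vec (j l : ℕ) :
    inducedRep α β φ z ((𝐝 * 𝐮) ^ j) (vec 0 l) = vec 0 (l + j) := by
  induction j with
  | zero => simp
  | succ j ih =>
    rw [pow_succ', map_mul, Module.End.mul_apply, ih, map_mul, Module.End.mul_apply, inducedRep_U,
      raise_vec, inducedRep_D, lower_vec_one, add_assoc]

lemma inducedRep_D_pow_vec (k : ℕ) :
    inducedRep α β φ z (𝐝 ^ k) (vec 0 0) = z ^ k • (vec 0 0 : InducedModule S) := by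
  induction k with
  | zero => simp
  | succ k ih =>
    rw [pow_succ', map_mul, Module.End.mul_apply, ih, map_smul, inducedRep_D,
      lower_vec_zero_zero, smul_smul, ← pow_succ]

/-- The map `a ↦ a · vec 0 0` from the down-up algebra to the induced module. -/
noncomputable def orbitMap : A α β φ →ₗ[MvPolynomial (Fin n) K] InducedModule S :=
  (LinearMap.applyₗ (vec 0 0)).restrictScalars _ ∘ₗ (inducedRep α β φ z).toLinearMap

lemma orbitMap_word (i j k : ℕ) :
    orbitMap α β φ z (word α β φ i j k) = z ^ k • (vec i j : InducedModule S) := by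
  change inducedRep α β φ z (word α β φ i j k) (vec 0 0) = _
  rw [word, map_mul, map_mul, Module.End.mul_apply, Module.End.mul_apply, inducedRep_D_pow_vec,
    map_smul, map_smul, inducedRep_DU_pow_vec, inducedRep_U_pow_vec, zero_add, zero_add]

end InducedRep

open Polynomial in
/-- The monomials `tᵃzᵏ` times the vectors `uⁱ(du)ʲ`, as a basis of the induced module over
`K[t₁,…,tₙ][z]`. -/
noncomputable def inducedBasis (K : Type) [Field K] (n : ℕ) :
    Module.Basis ((Fin n →₀ ℕ) × ℕ × ℕ × ℕ) K (InducedModule (MvPolynomial (Fin n) K)[X]) :=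
  (MvPolynomial.basisMonomials (Fin n) K).smulTower
    ((Polynomial.basisMonomials _).smulTower Finsupp.basisSingleOne)

lemma orbitMap_pbw (e : Fin n ⊕ Fin 3 → ℕ) :
    orbitMap α β φ Polynomial.X (pbw α β φ e) =
      inducedBasis K n (Finsupp.equivFunOnFinite.symm (e ∘ Sum.inl),
        e (.inr 2), e (.inr 0), e (.inr 1)) := by
  rw [pbw, map_smul, orbitMap_word, Polynomial.X_pow_eq_monomial, vec]
  simp [inducedBasis, Module.Basis.smulTower_apply]

theorem linearIndependent_pbw : LinearIndependent K (pbw α β φ) := by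
  have hindex : Function.Injective fun e : Fin n ⊕ Fin 3 → ℕ =>
      (Finsupp.equivFunOnFinite.symm (e ∘ Sum.inl), e (.inr 2), e (.inr 0), e (.inr 1)) := by
    intro e e' h
    simp only [Prod.mk.injEq, EmbeddingLike.apply_eq_iff_eq] at h
    obtain ⟨hvars, hd, hu, hdu⟩ := h
    ext (l | l)
    · exact congrFun hvars l
    · fin_cases l <;> assumption
  let orbit := (orbitMap α β φ (Polynomial.X (R := MvPolynomial (Fin n) K))).restrictScalars K
  have horbit : orbit ∘ pbw α β φ = inducedBasis K n ∘ _ := _root_.funext (orbitMap_pbw α β φ)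
  refine LinearIndependent.of_comp orbit ?_
  rw [horbit]
  exact (inducedBasis K n).linearIndependent.comp _ hindex

end Independence

section Filtration

/-- The weight of `u` and of `d` in the filtration, large enough for the relations to be
compatible with it when each `tₗ` has weight `1`. -/
noncomputable def weight : ℕ := φ.totalDegree + 1

/-- The elements of the down-up algebra of weight at most `m`, as the span of normal words with
polynomial coefficients. -/
noncomputable def filtration (m : ℕ) : Submodule K (A α β φ) :=
  Submodule.span K {x | ∃ (p : MvPolynomial (Fin n) K) (i j k : ℕ),
    p.totalDegree + weight φ * (i + 2 * j + k) ≤ m ∧ p • word α β φ i j k = x}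

variable {α β φ}

lemma filtration_le_iff {m : ℕ} {N : Submodule K (A α β φ)} :
    filtration α β φ m ≤ N ↔ ∀ (p : MvPolynomial (Fin n) K) (i j k : ℕ),
      p.totalDegree + weight φ * (i + 2 * j + k) ≤ m → p • word α β φ i j k ∈ N := by
  rw [filtration, Submodule.span_le]
  exact ⟨fun h p i j k hm => h ⟨p, i, j, k, hm, rfl⟩,
    fun h _ ⟨p, i, j, k, hm, hx⟩ => hx ▸ h p i j k hm⟩

lemma smul_word_mem_filtration {p : MvPolynomial (Fin n) K} {i j k m : ℕ}
    (h : p.totalDegree + weight φ * (i + 2 * j + k) ≤ m) :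
    p • word α β φ i j k ∈ filtration α β φ m :=
  (filtration_le_iff).1 le_rfl p i j k h

variable (α β φ) in
lemma word_mem_filtration (i j k : ℕ) :
    word α β φ i j k ∈ filtration α β φ (weight φ * (i + 2 * j + k)) := by
  rw [← one_smul (MvPolynomial (Fin n) K) (word α β φ i j k)]
  exact smul_word_mem_filtration (by simp)

lemma filtration_mono : Monotone (filtration α β φ) := fun _ _ h =>
  (filtration_le_iff).2 fun _ _ _ _ hm => smul_word_mem_filtration (hm.trans h)

lemma smul_mem_filtration (p : MvPolynomial (Fin n) K) {m : ℕ} {x : A α β φ}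
    (hx : x ∈ filtration α β φ m) : p • x ∈ filtration α β φ (p.totalDegree + m) := by
  refine (filtration_le_iff
    (N := (filtration α β φ _).comap (DistribSMul.toLinearMap K _ p))).2 (fun q i j k hm => ?_) hx
  rw [Submodule.mem_comap, DistribSMul.toLinearMap_apply, smul_smul]
  exact smul_word_mem_filtration (by linarith [totalDegree_mul p q])

lemma C_smul_mem_filtration (c : K) {m : ℕ} {x : A α β φ} (hx : x ∈ filtration α β φ m) :
    (C c : MvPolynomial (Fin n) K) • x ∈ filtration α β φ m := by
  simpa using smul_mem_filtration (C c) hx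

lemma U_mul_mem_filtration {m : ℕ} {x : A α β φ} (hx : x ∈ filtration α β φ m) :
    𝐮 * x ∈ filtration α β φ (m + weight φ) := by
  refine (filtration_le_iff
    (N := (filtration α β φ _).comap (LinearMap.mulLeft K 𝐮))).2 (fun p i j k hm => ?_) hx
  have hword : 𝐮 * p • word α β φ i j k = p • word α β φ (i + 1) j k := by
    simp only [word, mul_smul_comm, pow_succ', mul_assoc]
  rw [Submodule.mem_comap, LinearMap.mulLeft_apply, hword]
  exact smul_word_mem_filtration (by linarith)

lemma mul_D_pow_mem_filtration {m : ℕ} {x : A α β φ} (hx : x ∈ filtration α β φ m) (l : ℕ) :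
    x * 𝐝 ^ l ∈ filtration α β φ (m + weight φ * l) := by
  refine (filtration_le_iff
    (N := (filtration α β φ _).comap (LinearMap.mulRight K (𝐝 ^ l)))).2 (fun p i j k hm => ?_) hx
  have hword : p • word α β φ i j k * 𝐝 ^ l = p • word α β φ i j (k + l) := by
    simp only [word, smul_mul_assoc, pow_add, mul_assoc]
  rw [Submodule.mem_comap, LinearMap.mulRight_apply, hword]
  exact smul_word_mem_filtration (by linarith)

lemma twist_mul_mem_filtration {m : ℕ} {x : A α β φ}
    (hDU : 𝐝 * (𝐮 * x) ∈ filtration α β φ (m + 2 * weight φ))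
    (hUD : 𝐮 * (𝐝 * x) ∈ filtration α β φ (m + 2 * weight φ)) (hx : x ∈ filtration α β φ m) :
    twist (C α) (C β) φ 𝐮 𝐝 * x ∈ filtration α β φ (m + 2 * weight φ) := by
  have hφ : φ • x ∈ filtration α β φ (m + 2 * weight φ) :=
    filtration_mono (by rw [weight]; linarith) (smul_mem_filtration φ hx)
  simp only [twist, add_mul, smul_mul_assoc, mul_assoc, ← Algebra.smul_def]
  exact add_mem (add_mem (C_smul_mem_filtration α hDU) (C_smul_mem_filtration β hUD)) hφ

lemma D_mul_U_pow_mul_DU_pow_mem_filtration {j : ℕ}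
    (hj : 𝐝 * (𝐝 * 𝐮) ^ j ∈ filtration α β φ (weight φ * (2 * j + 1))) (i : ℕ) :
    𝐝 * (𝐮 ^ i * (𝐝 * 𝐮) ^ j) ∈ filtration α β φ (weight φ * (i + 2 * j + 1)) := by
  induction i using Nat.twoStepInduction with
  | zero => simpa using hj
  | one =>
    have hword : 𝐝 * (𝐮 ^ 1 * (𝐝 * 𝐮) ^ j) = word α β φ 0 (j + 1) 0 := by
      simp [word, pow_succ', mul_assoc]
    exact hword ▸ filtration_mono (by linarith) (word_mem_filtration α β φ 0 (j + 1) 0)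
  | more i hi hi' =>
    have hrel : 𝐝 * (𝐮 ^ (i + 2) * (𝐝 * 𝐮) ^ j) =
        𝐮 * (twist (C α) (C β) φ 𝐮 𝐝 * (𝐮 ^ i * (𝐝 * 𝐮) ^ j)) := by
      rw [← mul_assoc 𝐮 (twist ..), ← D_mul_U_mul_U]
      simp only [pow_succ', mul_assoc]
    have hword : 𝐮 ^ i * (𝐝 * 𝐮) ^ j ∈ filtration α β φ (weight φ * (i + 2 * j)) := by
      simpa [word] using word_mem_filtration α β φ i j 0
    rw [hrel]
    refine filtration_mono (by linarith)
      (U_mul_mem_filtration (twist_mul_mem_filtration ?_ ?_ hword))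
    · rw [← mul_assoc 𝐮, ← pow_succ']
      exact filtration_mono (by linarith) hi'
    · exact filtration_mono (by linarith) (U_mul_mem_filtration hi)

lemma D_mul_U_pow_mul_mem_filtration_of_forall {m : ℕ}
    (hm : ∀ j, weight φ * (2 * j) ≤ m →
      𝐝 * (𝐝 * 𝐮) ^ j ∈ filtration α β φ (weight φ * (2 * j + 1)))
    {x : A α β φ} (hx : x ∈ filtration α β φ m) (l : ℕ) :
    𝐝 * (𝐮 ^ l * x) ∈ filtration α β φ (m + weight φ * (l + 1)) := by
  refine (filtration_le_iff (N := (filtration α β φ _).comap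
    (LinearMap.mulLeft K 𝐝 ∘ₗ LinearMap.mulLeft K (𝐮 ^ l)))).2 (fun p i j k hpm => ?_) hx
  have hword : 𝐝 * (𝐮 ^ l * p • word α β φ i j k) =
      p • (𝐝 * (𝐮 ^ (l + i) * (𝐝 * 𝐮) ^ j) * 𝐝 ^ k) := by
    simp only [word, mul_smul_comm, pow_add, mul_assoc]
  have hj : weight φ * (2 * j) ≤ weight φ * (i + 2 * j + k) := Nat.mul_le_mul_left _ (by omega)
  have hlow := D_mul_U_pow_mul_DU_pow_mem_filtration (hm j (by omega)) (l + i)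
  rw [Submodule.mem_comap, LinearMap.comp_apply, LinearMap.mulLeft_apply, LinearMap.mulLeft_apply,
    hword]
  exact filtration_mono (by linarith) (smul_mem_filtration p (mul_D_pow_mem_filtration hlow k))

variable (α β φ) in
lemma D_mul_DU_pow_mem_filtration (j : ℕ) :
    𝐝 * (𝐝 * 𝐮) ^ j ∈ filtration α β φ (weight φ * (2 * j + 1)) := by
  induction j using Nat.strong_induction_on with
  | _ j ih =>
    cases j with
    | zero => simpa [word] using word_mem_filtration α β φ 0 0 1
    | succ j =>
      have hy := ih j j.lt_succ_self
      have hbelow (l : ℕ) (hl : weight φ * (2 * l) ≤ weight φ * (2 * j + 1)) :=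
        ih l (by have := Nat.le_of_mul_le_mul_left hl (Nat.succ_pos _); omega)
      have hrel : 𝐝 * (𝐝 * 𝐮) ^ (j + 1) =
          twist (C α) (C β) φ 𝐮 𝐝 * (𝐝 * (𝐝 * 𝐮) ^ j) := by
        rw [← mul_assoc, ← D_mul_D_mul_U, pow_succ']
        simp only [mul_assoc]
      rw [hrel]
      refine filtration_mono (by linarith) (twist_mul_mem_filtration ?_ ?_ hy)
      · have hDU := D_mul_U_pow_mul_mem_filtration_of_forall hbelow hy 1
        rw [pow_one] at hDU
        exact filtration_mono (by linarith) hDU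
      · have hD := D_mul_U_pow_mul_mem_filtration_of_forall hbelow hy 0
        rw [pow_zero, one_mul] at hD
        exact filtration_mono (by linarith) (U_mul_mem_filtration hD)

lemma D_mul_mem_filtration {m : ℕ} {x : A α β φ} (hx : x ∈ filtration α β φ m) :
    𝐝 * x ∈ filtration α β φ (m + weight φ) := by
  simpa using D_mul_U_pow_mul_mem_filtration_of_forall
    (fun j _ => D_mul_DU_pow_mem_filtration α β φ j) hx 0

lemma pow_mul_mem_filtration {a : A α β φ} {c : ℕ}
    (ha : ∀ {m : ℕ} {x : A α β φ}, x ∈ filtration α β φ m → a * x ∈ filtration α β φ (m + c))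
    {m : ℕ} {x : A α β φ} (hx : x ∈ filtration α β φ m) (l : ℕ) :
    a ^ l * x ∈ filtration α β φ (m + c * l) := by
  induction l with
  | zero => simpa using hx
  | succ l ih =>
    rw [pow_succ', mul_assoc, Nat.mul_succ, ← add_assoc]
    exact ha ih

lemma word_mul_mem_filtration (i j k : ℕ) {m : ℕ} {x : A α β φ} (hx : x ∈ filtration α β φ m) :
    word α β φ i j k * x ∈ filtration α β φ (m + weight φ * (i + 2 * j + k)) := by
  have hDU {m : ℕ} {x : A α β φ} (hx : x ∈ filtration α β φ m) :
      𝐝 * 𝐮 * x ∈ filtration α β φ (m + 2 * weight φ) := by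
    rw [mul_assoc, two_mul, ← add_assoc]
    exact D_mul_mem_filtration (U_mul_mem_filtration hx)
  rw [word, mul_assoc, mul_assoc]
  exact filtration_mono (by linarith) (pow_mul_mem_filtration U_mul_mem_filtration
    (pow_mul_mem_filtration hDU (pow_mul_mem_filtration D_mul_mem_filtration hx k) j) i)

instance : SetLike.GradedMonoid (filtration α β φ) where
  one_mem := by simpa [word] using word_mem_filtration α β φ 0 0 0
  mul_mem r m x y hx hy := by
    refine (filtration_le_iff
      (N := (filtration α β φ _).comap (LinearMap.mulRight K y))).2 (fun p i j k hr => ?_) hx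
    rw [Submodule.mem_comap, LinearMap.mulRight_apply, smul_mul_assoc]
    exact filtration_mono (by linarith) (smul_mem_filtration p (word_mul_mem_filtration i j k hy))

lemma exists_mem_filtration (x : A α β φ) : ∃ r, x ∈ filtration α β φ r := by
  have hone : (1 : A α β φ) ∈ filtration α β φ 0 := SetLike.GradedOne.one_mem
  induction x using induction_U_D with
  | hbase p =>
    rw [Algebra.algebraMap_eq_smul_one]
    exact ⟨_, smul_mem_filtration p hone⟩
  | hU => exact ⟨_, mul_one 𝐮 ▸ U_mul_mem_filtration hone⟩
  | hD => exact ⟨_, mul_one 𝐝 ▸ D_mul_mem_filtration hone⟩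
  | hadd x y hx hy =>
    obtain ⟨r, hr⟩ := hx
    obtain ⟨s, hs⟩ := hy
    exact ⟨max r s, add_mem (filtration_mono (le_max_left r s) hr)
      (filtration_mono (le_max_right r s) hs)⟩
  | hmul x y hx hy =>
    obtain ⟨r, hr⟩ := hx
    obtain ⟨s, hs⟩ := hy
    exact ⟨r + s, SetLike.mul_mem_graded hr hs⟩

lemma monomial_smul_word (a : Fin n →₀ ℕ) (c : K) (i j k : ℕ) :
    monomial a c • word α β φ i j k = c • pbw α β φ (Sum.elim a ![i, j, k]) := by
  have ha : Finsupp.equivFunOnFinite.symm (Sum.elim a ![i, j, k] ∘ Sum.inl) = a :=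
    Finsupp.ext fun _ => rfl
  rw [pbw, ha, ← smul_assoc, smul_monomial, smul_eq_mul, mul_one]
  rfl

lemma filtration_le_span_pbw (m : ℕ) :
    filtration α β φ m ≤ Submodule.span K (pbw α β φ '' Set.Iic (Function.const _ m)) := by
  refine (filtration_le_iff).2 fun p i j k hm => ?_
  rw [p.as_sum, Finset.sum_smul]
  refine Submodule.sum_mem _ fun a ha => ?_
  rw [monomial_smul_word]
  refine Submodule.smul_mem _ _ (Submodule.subset_span ⟨_, ?_, rfl⟩)
  have hdeg : a.degree ≤ p.totalDegree := le_totalDegree ha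
  have hword : i + 2 * j + k ≤ weight φ * (i + 2 * j + k) :=
    Nat.le_mul_of_pos_left _ (Nat.succ_pos _)
  rintro (l | l)
  · exact (Finsupp.le_degree l a).trans (by rw [Function.const_apply]; omega)
  · fin_cases l <;> simp <;> omega

end Filtration

section GeneratingSpace

/-- The span of the letters `u`, `du`, `d` and `tₗ` of the Poincaré–Birkhoff–Witt monomials. -/
noncomputable def letterSpan : Submodule K (A α β φ) :=
  Submodule.span K (Set.range (Sum.elim
    (fun l => algebraMap (MvPolynomial (Fin n) K) (A α β φ) (X l)) ![𝐮, 𝐝 * 𝐮, 𝐝]))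

lemma fg_letterSpan : (letterSpan α β φ).FG := Submodule.fg_span (Set.finite_range _)

lemma algebraMap_monomial_mem_letterSpan_pow (a : Fin n →₀ ℕ) :
    algebraMap (MvPolynomial (Fin n) K) (A α β φ) (monomial a 1) ∈
      letterSpan α β φ ^ a.degree := by
  induction a using Finsupp.induction_linear with
  | zero => simpa using ⟨1, map_one _⟩
  | add a b ha hb =>
    rw [← one_mul (1 : K), ← monomial_mul, map_mul, map_add, pow_add]
    exact Submodule.mul_mem_mul ha hb
  | single l m =>
    rw [← X_pow_eq_monomial, map_pow, Finsupp.degree_single]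
    have hletter : algebraMap _ _ (X l) ∈ letterSpan α β φ := Submodule.subset_span ⟨.inl l, rfl⟩
    exact Submodule.pow_mem_pow _ hletter m

lemma word_mem_letterSpan_pow (i j k : ℕ) :
    word α β φ i j k ∈ letterSpan α β φ ^ (i + j + k) := by
  have hletter (l : Fin 3) : ![𝐮, 𝐝 * 𝐮, 𝐝] l ∈ letterSpan α β φ :=
    Submodule.subset_span ⟨.inr l, rfl⟩
  rw [word, pow_add, pow_add]
  exact Submodule.mul_mem_mul (Submodule.mul_mem_mul (Submodule.pow_mem_pow _ (hletter 0) i)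
    (Submodule.pow_mem_pow _ (hletter 1) j)) (Submodule.pow_mem_pow _ (hletter 2) k)

lemma pbw_mem_letterSpan_pow (e : Fin n ⊕ Fin 3 → ℕ) :
    pbw α β φ e ∈ letterSpan α β φ ^ ∑ l, e l := by
  have hvars := algebraMap_monomial_mem_letterSpan_pow α β φ
    (Finsupp.equivFunOnFinite.symm (e ∘ Sum.inl))
  rw [Finsupp.degree_eq_sum] at hvars
  rw [pbw, Algebra.smul_def, Fintype.sum_sum_type, Fin.sum_univ_three, pow_add]
  exact Submodule.mul_mem_mul hvars (word_mem_letterSpan_pow α β φ _ _ _)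

end GeneratingSpace

end DownUp

open DownUp in
/-- The Gelfand–Kirillov dimension of the down-up algebra A(α,β,φ) over
K[t₁,…,tₙ] equals n+3. -/
theorem downUp_gkDim {K : Type} [Field K] {n : ℕ} (α β : K) (φ : MvPolynomial (Fin n) K) :
    gkDim K (A α β φ) = (n : ℝ≥0∞) + 3 := by
  have hcard : (n : ℝ≥0∞) + 3 = (Fintype.card (Fin n ⊕ Fin 3) : ℝ≥0∞) := by simp
  rw [hcard]
  exact le_antisymm
    (gkDim_le_card filtration_mono exists_mem_filtration filtration_le_span_pbw)
    (card_le_gkDim (linearIndependent_pbw α β φ) (fg_letterSpan α β φ)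
      (pbw_mem_letterSpan_pow α β φ))
end

section
/- If β ≠ 0, then the down-up algebra A(α,β,φ) over K[t₁,…,tₙ] is a domain (has no nonzero zero divisors). -/
open MvPolynomial

/-!
Put `x = u * d` and `y = d * u`. The relations say that `x` and `y` commute and that moving `d` from
left to right past a polynomial in `x` and `y` applies the endomorphism `σ : x ↦ y`,
`y ↦ a y + b x + c`, which is invertible because `b` is a unit. Hence the down-up algebra is the
generalized Weyl algebra `R[x, y](σ, x)`, spanned over `R[x, y]` by the powers of `d` and of `u`.
Sending `d ↦ τ` and `u ↦ x τ⁻¹` maps it to the skew Laurent ring of `σ`; the spanning monomials go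
to nonzero multiples of distinct powers of `τ`, so the map is injective. The skew Laurent ring has
no zero divisors because leading coefficients multiply up to a power of `σ`.
-/

section SkewMonoidAlgebra

open SkewMonoidAlgebra

variable {k G : Type*}

theorem coeff_skew_mul_of_uniqueMul [Semiring k] [Monoid G] [MulSemiringAction G k]
    {f g : SkewMonoidAlgebra k G} {a b : G} (h : UniqueMul f.support g.support a b) :
    (f * g).coeff (a * b) = f.coeff a * a • g.coeff b := by
  classical
  simp_rw [SkewMonoidAlgebra.coeff_mul, sum_def', ← Finset.sum_product']
  refine (Finset.sum_eq_single (a, b) ?_ ?_).trans (if_pos rfl)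
  · intro p hp hne
    rw [Finset.mem_product] at hp
    exact if_neg fun heq ↦ hne (Prod.ext_iff.2 (h hp.1 hp.2 heq))
  · intro hab
    rw [if_pos rfl]
    rcases not_and_or.1 (Finset.mem_product.not.1 hab) with ha | hb
    · rw [notMem_support_iff.1 ha, zero_mul]
    · rw [notMem_support_iff.1 hb, smul_zero, mul_zero]

theorem noZeroDivisors_skewMonoidAlgebra [Semiring k] [NoZeroDivisors k] [Group G] [UniqueProds G]
    [MulSemiringAction G k] : NoZeroDivisors (SkewMonoidAlgebra k G) where
  eq_zero_or_eq_zero_of_mul_eq_zero {f g} hfg := by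
    contrapose! hfg
    simp only [ne_eq, ← SkewMonoidAlgebra.support_eq_empty, ← Finset.nonempty_iff_ne_empty]
      at hfg ⊢
    obtain ⟨a, ha, b, hb, hab⟩ := UniqueProds.uniqueMul_of_nonempty hfg.1 hfg.2
    refine ⟨a * b, ?_⟩
    rw [SkewMonoidAlgebra.mem_support_iff] at ha hb ⊢
    rw [coeff_skew_mul_of_uniqueMul hab]
    exact mul_ne_zero ha ((smul_ne_zero_iff_ne a).2 hb)

theorem exists_single_pow_eq_single [Semiring k] [NoZeroDivisors k] [Nontrivial k] [Group G]
    [MulSemiringAction G k] {r : k} (hr : r ≠ 0) (g : G) (n : ℕ) :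
    ∃ s : k, s ≠ 0 ∧ single g r ^ n = single (g ^ n) s := by
  induction n with
  | zero => exact ⟨1, one_ne_zero, by rw [pow_zero, pow_zero, single_one_one]⟩
  | succ n ih =>
    obtain ⟨s, hs, hpow⟩ := ih
    refine ⟨r * g • s, mul_ne_zero hr ((smul_ne_zero_iff_ne g).2 hs), ?_⟩
    rw [pow_succ', hpow, single_mul_single, pow_succ']

/-- The inclusion of the coefficient ring in a skew monoid algebra, as a homomorphism of
algebras over a ring `R` of scalars on which the monoid acts trivially. -/
noncomputable def singleOneAlgHom (R k G : Type*) [CommSemiring R] [Semiring k] [Algebra R k]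
    [Monoid G] [MulSemiringAction G k] [SMulCommClass G R k] : k →ₐ[R] SkewMonoidAlgebra k G where
  toRingHom := singleOneRingHom
  commutes' _ := rfl

@[simp]
theorem singleOneAlgHom_apply {R : Type*} [CommSemiring R] [Semiring k] [Algebra R k] [Monoid G]
    [MulSemiringAction G k] [SMulCommClass G R k] (s : k) :
    singleOneAlgHom R k G s = single 1 s :=
  rfl

end SkewMonoidAlgebra

section GeneralizedWeylAlgebra

open SkewMonoidAlgebra

/-- The generator of the infinite cyclic group. An action of `Multiplicative ℤ` on a ring `S` is
an automorphism of `S`, namely `s ↦ shift • s`. -/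
abbrev shift : Multiplicative ℤ := Multiplicative.ofAdd 1

variable {R S A : Type*} [CommRing R] [Ring S] [Algebra R S] [Ring A]
  [Algebra R A] {ι : S →ₐ[R] A} {u d : A}

/-- The standard monomial of degree `n` in a Weyl pair, where `d` has degree `1` and `u` has
degree `-1`. -/
def weylMonomial (u d : A) : ℤ → A
  | .ofNat n => d ^ n
  | .negSucc n => u ^ (n + 1)

/-- The additive map sending the skew Laurent polynomial `∑ sₙ τⁿ` to `∑ ι sₙ * vₙ`, where `vₙ` is
the standard monomial of degree `n`. It is not multiplicative. -/
noncomputable def weylSum (ι : S →ₐ[R] A) (u d : A) : SkewMonoidAlgebra S (Multiplicative ℤ) →+ A :=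
  liftNC (ι : S →+ A) fun g ↦ weylMonomial u d g.toAdd

@[simp]
theorem weylSum_single (g : Multiplicative ℤ) (s : S) :
    weylSum ι u d (single g s) = ι s * weylMonomial u d g.toAdd :=
  liftNC_single _ _ _ _

theorem map_weylMonomial {B : Type*} [Ring B] [Algebra R B] (f : A →ₐ[R] B) (u d : A) :
    ∀ n : ℤ, f (weylMonomial u d n) = weylMonomial (f u) (f d) n
  | .ofNat n => map_pow f d n
  | .negSucc n => map_pow f u (n + 1)

theorem algHom_mul_mem_range_weylSum (s : S) (f : SkewMonoidAlgebra S (Multiplicative ℤ)) :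
    ι s * weylSum ι u d f ∈ (weylSum ι u d).range := by
  induction f with
  | single g t => exact ⟨single g (s * t), by simp [mul_assoc]⟩
  | add f g hf hg => rw [map_add, mul_add]; exact add_mem hf hg

variable [MulSemiringAction (Multiplicative ℤ) S] {x : S}

/-- The relations of Bavula's generalized Weyl algebra `S(σ, x)`, with `σ s = shift • s`, for a pair
`u`, `d` of elements of an algebra `A` under `S`. -/
structure IsWeylPair (ι : S →ₐ[R] A) (x : S) (u d : A) : Prop where
  u_mul_d : u * d = ι x
  d_mul_u : d * u = ι (shift • x)
  semiconjBy_d : ∀ s, SemiconjBy d (ι s) (ι (shift • s))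
  semiconjBy_u : ∀ s, SemiconjBy u (ι (shift • s)) (ι s)

namespace IsWeylPair

theorem d_mul_weylMonomial (h : IsWeylPair ι x u d) :
    ∀ n : ℤ, ∃ s, d * weylMonomial u d n = ι s * weylMonomial u d (n + 1)
  | .ofNat n => ⟨1, by rw [map_one, one_mul]; exact (pow_succ' d n).symm⟩
  | .negSucc 0 => ⟨shift • x, by simp [weylMonomial, h.d_mul_u]⟩
  | .negSucc (n + 1) => ⟨shift • x, by
      rw [← h.d_mul_u, mul_assoc]; exact congrArg (d * ·) (pow_succ' u (n + 1))⟩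

theorem u_mul_weylMonomial (h : IsWeylPair ι x u d) :
    ∀ n : ℤ, ∃ s, u * weylMonomial u d n = ι s * weylMonomial u d (n - 1)
  | .ofNat 0 => ⟨1, by
      change u * d ^ 0 = ι 1 * u ^ (0 + 1)
      simp⟩
  | .ofNat (n + 1) => ⟨x, by
      rw [← h.u_mul_d, mul_assoc, Int.ofNat_eq_natCast, Nat.cast_succ, add_sub_cancel_right]
      exact congrArg (u * ·) (pow_succ' d n)⟩
  | .negSucc n => ⟨1, by rw [map_one, one_mul]; exact (pow_succ' u (n + 1)).symm⟩

theorem d_mul_mem_range_weylSum (h : IsWeylPair ι x u d)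
    (f : SkewMonoidAlgebra S (Multiplicative ℤ)) :
    d * weylSum ι u d f ∈ (weylSum ι u d).range := by
  induction f with
  | single g t =>
    obtain ⟨s, hs⟩ := h.d_mul_weylMonomial g.toAdd
    refine ⟨single (g * shift) (shift • t * s), ?_⟩
    rw [weylSum_single, weylSum_single, ← mul_assoc, (h.semiconjBy_d t).eq, mul_assoc, hs, map_mul,
      mul_assoc, toAdd_mul, toAdd_ofAdd]
  | add f g hf hg => rw [map_add, mul_add]; exact add_mem hf hg

theorem u_mul_mem_range_weylSum (h : IsWeylPair ι x u d)
    (f : SkewMonoidAlgebra S (Multiplicative ℤ)) :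
    u * weylSum ι u d f ∈ (weylSum ι u d).range := by
  induction f with
  | single g t =>
    obtain ⟨s, hs⟩ := h.u_mul_weylMonomial g.toAdd
    have hut : u * ι t = ι (shift⁻¹ • t) * u := by
      simpa only [smul_inv_smul] using (h.semiconjBy_u (shift⁻¹ • t)).eq
    refine ⟨single (g * shift⁻¹) (shift⁻¹ • t * s), ?_⟩
    rw [weylSum_single, weylSum_single, ← mul_assoc, hut, mul_assoc, hs, map_mul, mul_assoc,
      toAdd_mul, toAdd_inv, toAdd_ofAdd, sub_eq_add_neg]
  | add f g hf hg => rw [map_add, mul_add]; exact add_mem hf hg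

theorem weylSum_surjective (h : IsWeylPair ι x u d)
    (hgen : Algebra.adjoin R (Set.range ι ∪ {u, d}) = ⊤) :
    Function.Surjective (weylSum ι u d) := by
  have mul_mem_range (a : A) : ∀ p ∈ (weylSum ι u d).range, a * p ∈ (weylSum ι u d).range := by
    have ha : a ∈ Algebra.adjoin R (Set.range ι ∪ {u, d}) := hgen ▸ Algebra.mem_top
    induction ha using Algebra.adjoin_induction with
    | mem a ha =>
      rintro _ ⟨f, rfl⟩
      rcases ha with ⟨s, rfl⟩ | rfl | rfl
      · exact algHom_mul_mem_range_weylSum s f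
      · exact h.u_mul_mem_range_weylSum f
      · exact h.d_mul_mem_range_weylSum f
    | algebraMap r =>
      rintro _ ⟨f, rfl⟩
      rw [← ι.commutes]
      exact algHom_mul_mem_range_weylSum _ f
    | add a b _ _ ha hb => exact fun p hp ↦ by rw [add_mul]; exact add_mem (ha p hp) (hb p hp)
    | mul a b _ _ ha hb => exact fun p hp ↦ by rw [mul_assoc]; exact ha _ (hb p hp)
  intro a
  simpa using mul_mem_range a 1 ⟨single 1 1, by
    rw [weylSum_single, map_one, one_mul]; exact pow_zero d⟩

end IsWeylPair

variable [SMulCommClass (Multiplicative ℤ) R S]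

theorem isWeylPair_single (hx : ∀ s, Commute x s) :
    IsWeylPair (singleOneAlgHom R S (Multiplicative ℤ)) x (single shift⁻¹ x) (single shift 1) where
  u_mul_d := by simp [single_mul_single]
  d_mul_u := by simp [single_mul_single]
  semiconjBy_d s := by simp [SemiconjBy, single_mul_single]
  semiconjBy_u s := by simp [SemiconjBy, single_mul_single, (hx s).eq]

theorem exists_weylMonomial_single_eq_single [IsDomain S] (hx : x ≠ 0) :
    ∀ n : ℤ, ∃ s : S, s ≠ 0 ∧
      weylMonomial (single shift⁻¹ x) (single shift 1) n = single (Multiplicative.ofAdd n) s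
  | .ofNat n => by
    obtain ⟨s, hs, hpow⟩ := exists_single_pow_eq_single (one_ne_zero (α := S)) shift n
    exact ⟨s, hs, hpow.trans (by simp [← ofAdd_nsmul])⟩
  | .negSucc n => by
    obtain ⟨s, hs, hpow⟩ := exists_single_pow_eq_single hx shift⁻¹ (n + 1)
    exact ⟨s, hs, hpow.trans (by simp [← ofAdd_neg, ← ofAdd_nsmul, Int.negSucc_eq])⟩

theorem weylSum_single_injective [IsDomain S] (hx : x ≠ 0) :
    Function.Injective (weylSum (singleOneAlgHom R S (Multiplicative ℤ))
      (single shift⁻¹ x) (single shift 1)) := by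
  choose s hs hmonomial using exists_weylMonomial_single_eq_single hx
  have coeff_weylSum (f : SkewMonoidAlgebra S (Multiplicative ℤ)) (g : Multiplicative ℤ) :
      (weylSum (singleOneAlgHom R S _) (single shift⁻¹ x) (single shift 1) f).coeff g =
        f.coeff g * s g.toAdd := by
    classical
    induction f with
    | single a t =>
      rw [weylSum_single, hmonomial, singleOneAlgHom_apply, single_mul_single, one_smul, one_mul,
        ofAdd_toAdd, coeff_single_apply, coeff_single_apply, ite_mul, zero_mul]
      split_ifs with hag
      · rw [hag]
      · rfl
    | add f₁ f₂ h₁ h₂ => simp only [map_add, SkewMonoidAlgebra.coeff_add, Finsupp.add_apply, h₁, h₂,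
        add_mul]
  intro f₁ f₂ hf
  ext g
  apply mul_right_cancel₀ (hs g.toAdd)
  rw [← coeff_weylSum, ← coeff_weylSum, hf]

theorem IsWeylPair.injective_of_map_eq_single [IsDomain S] (h : IsWeylPair ι x u d) (hx : x ≠ 0)
    (hgen : Algebra.adjoin R (Set.range ι ∪ {u, d}) = ⊤)
    {Φ : A →ₐ[R] SkewMonoidAlgebra S (Multiplicative ℤ)} (hι : Φ.comp ι = singleOneAlgHom R S _)
    (hu : Φ u = single shift⁻¹ x) (hd : Φ d = single shift 1) : Function.Injective Φ := by
  have hcomp : (Φ : A →+ _).comp (weylSum ι u d) =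
      weylSum (singleOneAlgHom R S _) (single shift⁻¹ x) (single shift 1) := by
    ext g s : 2
    simp [← hι, map_weylMonomial, hu, hd]
  refine Function.Injective.of_comp_right ?_ (h.weylSum_surjective hgen)
  exact (congrArg (fun f ↦ Function.Injective (DFunLike.coe f)) hcomp).mpr
    (weylSum_single_injective hx)

theorem IsWeylPair.isDomain [IsDomain S] (h : IsWeylPair ι x u d) (hx : x ≠ 0)
    (hgen : Algebra.adjoin R (Set.range ι ∪ {u, d}) = ⊤)
    {Φ : A →ₐ[R] SkewMonoidAlgebra S (Multiplicative ℤ)} (hι : Φ.comp ι = singleOneAlgHom R S _)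
    (hu : Φ u = single shift⁻¹ x) (hd : Φ d = single shift 1) : IsDomain A := by
  have := noZeroDivisors_skewMonoidAlgebra (k := S) (G := Multiplicative ℤ)
  have : NoZeroDivisors A :=
    (h.injective_of_map_eq_single hx hgen hι hu hd).noZeroDivisors Φ (map_zero Φ) (map_mul Φ)
  have : Nontrivial A := Φ.toRingHom.domain_nontrivial
  exact NoZeroDivisors.to_isDomain A

end GeneralizedWeylAlgebra

section DownUpAlgebra

open SkewMonoidAlgebra
open scoped Polynomial Polynomial.Bivariate

theorem semiconjBy_map_polynomial {P A F : Type*} [Semiring P] [Semiring A] [FunLike F P[X] A]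
    [RingHomClass F P[X] A] {f g : F} {d : A}
    (hC : ∀ a, SemiconjBy d (f (Polynomial.C a)) (g (Polynomial.C a)))
    (hX : SemiconjBy d (f Polynomial.X) (g Polynomial.X)) (p : P[X]) :
    SemiconjBy d (f p) (g p) := by
  induction p using Polynomial.induction_on' with
  | add p q hp hq => simpa only [map_add] using hp.add_right hq
  | monomial n a =>
    simpa only [← Polynomial.C_mul_X_pow_eq_monomial, map_mul, map_pow] using
      (hC a).mul_right (hX.pow_right n)

variable {R A : Type*} [CommRing R] [Ring A] [Algebra R A] {a b c : R} {u d : A}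

theorem bivariate_algHom_ext {f g : R[X][Y] →ₐ[R] A}
    (hX : f (Polynomial.C Polynomial.X) = g (Polynomial.C Polynomial.X)) (hY : f Y = g Y) : f = g :=
  Polynomial.algHom_ext' (Polynomial.algHom_ext hX) hY

theorem semiconjBy_map_bivariate {f g : R[X][Y] →ₐ[R] A}
    (hX : SemiconjBy d (f (Polynomial.C Polynomial.X)) (g (Polynomial.C Polynomial.X)))
    (hY : SemiconjBy d (f Y) (g Y)) (p : R[X][Y]) : SemiconjBy d (f p) (g p) := by
  have map_scalar (φ : R[X][Y] →ₐ[R] A) (r : R) :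
      φ (Polynomial.C (Polynomial.C r)) = algebraMap R A r :=
    φ.commutes r
  refine semiconjBy_map_polynomial (fun s ↦ ?_) hY p
  refine semiconjBy_map_polynomial (f := f.comp Polynomial.CAlgHom)
    (g := g.comp Polynomial.CAlgHom) (fun r ↦ ?_) hX s
  simpa [map_scalar, Commute] using Algebra.commute_algebraMap_right r d

theorem commute_aeval_of_commute {p q : A} (h : Commute p q) (s : R[X]) :
    Commute (Polynomial.aeval p s) q :=
  Commute.symm <| semiconjBy_map_polynomial (f := Polynomial.aeval p) (g := Polynomial.aeval p)
    (fun r ↦ by simpa [Commute] using Algebra.commute_algebraMap_right r q)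
    (by simpa [Commute] using h.symm) s

/-- Evaluation of bivariate polynomials at a commuting pair of elements of a possibly
noncommutative algebra: the inner variable goes to `p` and the outer variable to `q`. -/
noncomputable def aevalCommute {p q : A} (h : Commute p q) : R[X][Y] →ₐ[R] A :=
  Polynomial.eval₂AlgHom (Polynomial.aeval p) q (commute_aeval_of_commute h)

@[simp]
theorem aevalCommute_C {p q : A} (h : Commute p q) (s : R[X]) :
    aevalCommute h (Polynomial.C s) = Polynomial.aeval p s := by
  simp [aevalCommute]

@[simp]
theorem aevalCommute_Y {p q : A} (h : Commute p q) : aevalCommute (R := R) h Y = q := by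
  simp [aevalCommute]

/-- The relations of the down-up algebra `A(a, b, c)` for a pair of elements `u`, `d` of an
algebra. -/
structure IsDownUpPair (a b c : R) (u d : A) : Prop where
  ddu : d * d * u = a • (d * u * d) + b • (u * d * d) + c • d
  duu : d * u * u = a • (u * d * u) + b • (u * u * d) + c • u

theorem IsWeylPair.isDownUpPair {S : Type*} [Ring S] [Algebra R S]
    [MulSemiringAction (Multiplicative ℤ) S] {ι : S →ₐ[R] A} {x : S} (h : IsWeylPair ι x u d)
    (hx : shift • shift • x = a • shift • x + b • x + algebraMap R S c) :
    IsDownUpPair a b c u d where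
  ddu := by
    rw [mul_assoc, h.d_mul_u, (h.semiconjBy_d _).eq, hx]
    simp [← h.d_mul_u, ← h.u_mul_d, add_mul, mul_assoc, Algebra.smul_def]
  duu := by
    rw [h.d_mul_u, ← (h.semiconjBy_u _).eq, hx]
    simp [← h.d_mul_u, ← h.u_mul_d, mul_add, mul_assoc, Algebra.smul_def, Algebra.commutes]

namespace IsDownUpPair

theorem commute_ud_du (h : IsDownUpPair a b c u d) : Commute (u * d) (d * u) :=
  calc u * d * (d * u) = u * (d * d * u) := by noncomm_ring
    _ = d * u * u * d := by
      rw [h.ddu, h.duu]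
      simp only [mul_add, add_mul, mul_smul_comm, smul_mul_assoc, mul_assoc]
    _ = d * u * (u * d) := by noncomm_ring

theorem isWeylPair [MulSemiringAction (Multiplicative ℤ) R[X][Y]]
    [SMulCommClass (Multiplicative ℤ) R R[X][Y]] (h : IsDownUpPair a b c u d)
    (hX : shift • (Polynomial.C Polynomial.X : R[X][Y]) = Y)
    (hY : shift • (Y : R[X][Y]) =
      a • Y + b • (Polynomial.C Polynomial.X : R[X][Y]) + algebraMap R R[X][Y] c) :
    IsWeylPair (aevalCommute (R := R) h.commute_ud_du) (Polynomial.C Polynomial.X) u d where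
  u_mul_d := by simp
  d_mul_u := by simp [hX]
  semiconjBy_d :=
    semiconjBy_map_bivariate
      (g := (aevalCommute h.commute_ud_du).comp (MulSemiringAction.toAlgHom R R[X][Y] shift))
      (by simp [SemiconjBy, hX, mul_assoc])
      (by simp [SemiconjBy, hY, ← mul_assoc, h.ddu, add_mul, Algebra.smul_def])
  semiconjBy_u :=
    semiconjBy_map_bivariate
      (f := (aevalCommute h.commute_ud_du).comp (MulSemiringAction.toAlgHom R R[X][Y] shift))
      (by simp [SemiconjBy, hX, mul_assoc])
      (by simp [SemiconjBy, hY, ← mul_assoc, h.duu, mul_add, Algebra.smul_def c u,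
        Algebra.commutes c u])

end IsDownUpPair

open DownUp (Gen)

/-- The defining relations of the down-up algebra `A(a, b, c)`, whose parameters all lie in the
base ring. -/
inductive DownUpAlgebra.Rel (a b c : R) : FreeAlgebra R Gen → FreeAlgebra R Gen → Prop
  | ddu : Rel a b c (.ι R .d * .ι R .d * .ι R .u)
      (a • (.ι R .d * .ι R .u * .ι R .d) + b • (.ι R .u * .ι R .d * .ι R .d) + c • .ι R .d)
  | duu : Rel a b c (.ι R .d * .ι R .u * .ι R .u)
      (a • (.ι R .u * .ι R .d * .ι R .u) + b • (.ι R .u * .ι R .u * .ι R .d) + c • .ι R .u)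

/-- The down-up algebra `A(a, b, c)` over a commutative ring. -/
abbrev DownUpAlgebra (a b c : R) : Type _ := RingQuot (DownUpAlgebra.Rel a b c)

namespace DownUpAlgebra

variable (a b c) in
/-- The class of a generator in the down-up algebra. -/
noncomputable def of (i : Gen) : DownUpAlgebra a b c :=
  RingQuot.mkAlgHom R (Rel a b c) (.ι R i)

theorem isDownUpPair_of : IsDownUpPair a b c (of a b c .u) (of a b c .d) where
  ddu := by simpa [of] using RingQuot.mkAlgHom_rel R (Rel.ddu (a := a) (b := b) (c := c))
  duu := by simpa [of] using RingQuot.mkAlgHom_rel R (Rel.duu (a := a) (b := b) (c := c))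

theorem adjoin_range_of : Algebra.adjoin R (Set.range (of a b c)) = ⊤ := by
  change Algebra.adjoin R (Set.range (RingQuot.mkAlgHom R (Rel a b c) ∘ FreeAlgebra.ι R)) = ⊤
  rw [Set.range_comp, ← AlgHom.map_adjoin, FreeAlgebra.adjoin_range_ι, Algebra.map_top,
    AlgHom.range_eq_top]
  exact RingQuot.mkAlgHom_surjective R _

/-- The universal property of the down-up algebra. -/
noncomputable def lift (h : IsDownUpPair a b c u d) : DownUpAlgebra a b c →ₐ[R] A :=
  RingQuot.liftAlgHom R ⟨FreeAlgebra.lift R (Gen.rec u d), by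
    rintro _ _ (_ | _)
    · simpa using h.ddu
    · simpa using h.duu⟩

theorem lift_of_u (h : IsDownUpPair a b c u d) : lift h (of a b c .u) = u := by
  simp [lift, of]

theorem lift_of_d (h : IsDownUpPair a b c u d) : lift h (of a b c .d) = d := by
  simp [lift, of]

theorem isDomain_of_shift_smul_eq [IsDomain R] [MulSemiringAction (Multiplicative ℤ) R[X][Y]]
    [SMulCommClass (Multiplicative ℤ) R R[X][Y]]
    (hX : shift • (Polynomial.C Polynomial.X : R[X][Y]) = Y)
    (hY : shift • (Y : R[X][Y]) =
      a • Y + b • (Polynomial.C Polynomial.X : R[X][Y]) + algebraMap R R[X][Y] c) :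
    IsDomain (DownUpAlgebra a b c) := by
  have hmodel : IsDownUpPair a b c
      (single shift⁻¹ (Polynomial.C Polynomial.X) : SkewMonoidAlgebra R[X][Y] (Multiplicative ℤ))
      (single shift 1) :=
    (isWeylPair_single (Commute.all _)).isDownUpPair (by rw [hX, hY])
  have hweyl := isDownUpPair_of.isWeylPair hX hY
  have hgen : Algebra.adjoin R (Set.range (aevalCommute (R := R) isDownUpPair_of.commute_ud_du) ∪
      {of a b c .u, of a b c .d}) = ⊤ := by
    refine top_le_iff.1 (adjoin_range_of.ge.trans (Algebra.adjoin_mono ?_))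
    rintro _ ⟨_ | _, rfl⟩ <;> simp
  refine hweyl.isDomain (by simp) hgen (Φ := lift hmodel) ?_ (lift_of_u hmodel) (lift_of_d hmodel)
  ext <;> simp [lift_of_u, lift_of_d, single_mul_single, hX]

end DownUpAlgebra

/-- The automorphism `X ↦ Y`, `Y ↦ a Y + b X + c` of the polynomial ring in two variables. -/
noncomputable def downUpEquiv (a : R) (b : Rˣ) (c : R) : R[X][Y] ≃ₐ[R] R[X][Y] :=
  .ofAlgHom
    (Polynomial.aevalAeval Y
      (a • Y + (b : R) • (Polynomial.C Polynomial.X : R[X][Y]) + algebraMap R R[X][Y] c))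
    (Polynomial.aevalAeval
      ((↑b⁻¹ : R) • (Y - algebraMap R R[X][Y] c - a • (Polynomial.C Polynomial.X : R[X][Y])))
      (Polynomial.C Polynomial.X))
    (bivariate_algHom_ext
      (by simp only [AlgHom.comp_apply, AlgHom.id_apply, Polynomial.aevalAeval_X,
        Polynomial.aevalAeval_Y, map_smul, map_sub, AlgHom.commutes, add_sub_cancel_right,
        add_sub_cancel_left, smul_smul, Units.inv_mul, one_smul])
      (by simp))
    (bivariate_algHom_ext
      (by simp)
      (by simp only [AlgHom.comp_apply, AlgHom.id_apply, Polynomial.aevalAeval_X,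
        Polynomial.aevalAeval_Y, map_smul, map_add, AlgHom.commutes, smul_smul, Units.mul_inv,
        one_smul, add_sub_cancel, sub_add_cancel]))

theorem downUp_isDomain_general [IsDomain R] (hb : IsUnit b) :
    IsDomain (DownUpAlgebra a b c) := by
  obtain ⟨b, rfl⟩ := hb
  let _ : MulSemiringAction (Multiplicative ℤ) R[X][Y] :=
    MulSemiringAction.compHom _ (zpowersHom _ (downUpEquiv a b c))
  have : SMulCommClass (Multiplicative ℤ) R R[X][Y] :=
    ⟨fun g r p ↦ map_smul (zpowersHom _ (downUpEquiv a b c) g) r p⟩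
  have shift_smul (p : R[X][Y]) : shift • p = downUpEquiv a b c p :=
    congrArg (fun σ : R[X][Y] ≃ₐ[R] R[X][Y] ↦ σ p) (zpow_one _)
  apply DownUpAlgebra.isDomain_of_shift_smul_eq
  · exact (shift_smul _).trans (Polynomial.aevalAeval_X _ _)
  · exact (shift_smul _).trans (Polynomial.aevalAeval_Y _ _)

end DownUpAlgebra

theorem DownUp.rel_eq {K : Type} [Field K] {n : ℕ} (α β : K) (φ : MvPolynomial (Fin n) K) :
    Rel α β φ = DownUpAlgebra.Rel (C α) (C β) φ := by
  have smul_eq (k : K) (z : F K n) : k • z = (C k : MvPolynomial (Fin n) K) • z :=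
    algebra_compatible_smul _ k z
  have ddu_eq (u d : F K n) : α • (d * u * d) + β • (u * d * d) + algebraMap _ _ φ * d =
      (C α : MvPolynomial (Fin n) K) • (d * u * d) +
        (C β : MvPolynomial (Fin n) K) • (u * d * d) + φ • d := by
    rw [smul_eq, smul_eq, Algebra.smul_def φ]
  have duu_eq (u d : F K n) : α • (u * d * u) + β • (u * u * d) + u * algebraMap _ _ φ =
      (C α : MvPolynomial (Fin n) K) • (u * d * u) +
        (C β : MvPolynomial (Fin n) K) • (u * u * d) + φ • u := by
    rw [smul_eq, smul_eq, Algebra.smul_def φ, Algebra.commutes]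
  ext p q
  constructor
  · rintro (_ | _)
    · exact ddu_eq uF dF ▸ .ddu
    · exact duu_eq uF dF ▸ .duu
  · rintro (_ | _)
    · exact ddu_eq uF dF ▸ Rel.ddu (α := α)
    · exact duu_eq uF dF ▸ Rel.duu (α := α)

open DownUp in
/-- If β ≠ 0, the down-up algebra A(α,β,φ) over K[t₁,…,tₙ] is a domain. -/
theorem downUp_isDomain {K : Type} [Field K] {n : ℕ}
    (α β : K) (hβ : β ≠ 0) (φ : MvPolynomial (Fin n) K) :
    IsDomain (A α β φ) := by
  change IsDomain (RingQuot (Rel α β φ))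
  rw [rel_eq]
  exact downUp_isDomain_general (hβ.isUnit.map C)
end

section
/- If β ≠ 0, then the down-up algebra A(α,β,φ) over K[t₁,…,tₙ] is left and right noetherian. -/
open MvPolynomial

/-!
The algebra is built up as `P[ud, du] ⊆ P[ud, du, d] ⊆ P[ud, du, d, u]` over `P = K[t₁, …, tₙ]`. The
relations make `ud` and `du` commute, so the first algebra is noetherian by Hilbert's basis theorem.
Since `β` is invertible, the relations also say that `d`, and then `u`, can be moved across the
previous algebra `B` from either side: `dB + B = Bd + B` and `uB + B = Bu + B`. Hilbert's
leading-coefficient argument survives in this situation, so each extension is again left noetherian.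
Reversing multiplication exchanges `u` and `d` and preserves the relations, which gives the right
noetherian property.
-/

/-! ### Almost normalizing extensions -/

theorem wellFoundedGT_nat_orderHom {α : Type*} [PartialOrder α] [WellFoundedGT α] :
    WellFoundedGT (ℕ →o α) := by
  rw [wellFoundedGT_iff_monotone_chain_condition]
  intro a
  let diagonal : ℕ →o α := ⟨fun k ↦ a k k, fun _ _ h ↦ (a.monotone h _).trans ((a _).monotone h)⟩
  obtain ⟨N, hN⟩ := WellFoundedGT.monotone_chain_condition diagonal
  have column (n : ℕ) : ∃ M, ∀ m, M ≤ m → a M n = a m n :=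
    WellFoundedGT.monotone_chain_condition ⟨fun k ↦ a k n, fun _ _ h ↦ a.monotone h n⟩
  choose M hM using column
  have eq_corner {k n : ℕ} (hk : N ≤ k) (hn : N ≤ n) : a k n = a N N := by
    refine le_antisymm ?_ ((a.monotone hk N).trans ((a k).monotone hn))
    calc a k n ≤ a (max k n) n := a.monotone (le_max_left k n) n
      _ ≤ a (max k n) (max k n) := (a _).monotone (le_max_right k n)
      _ = a N N := (hN _ (hk.trans (le_max_left k n))).symm
  refine ⟨max N ((Finset.range N).sup M), fun m hm ↦ OrderHom.ext _ _ (funext fun n ↦ ?_)⟩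
  have ⟨hNm, hMm⟩ := max_le_iff.mp hm
  rcases lt_or_ge n N with hn | hn
  · have hMn : M n ≤ (Finset.range N).sup M := Finset.le_sup (Finset.mem_range.mpr hn)
    exact (hM n _ (hMn.trans (le_max_right _ _))).symm.trans (hM n m (hMn.trans hMm))
  · exact (eq_corner (le_max_left _ _) hn).trans (eq_corner hNm hn).symm

/-- `x` almost normalizes the image `B` of `f` if `xB + B = Bx + B`. If moreover `B` and `x`
generate `S`, then `S` is an almost normalizing extension of `B`; Ore extensions with bijective
twist are an example. -/
structure IsAlmostNormalizing {R S : Type*} [Ring R] [Ring S] (f : R →+* S) (x : S) : Prop where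
  exists_mul_map (r : R) : ∃ p q, x * f r = f p * x + f q
  exists_map_mul (r : R) : ∃ p q, f r * x = x * f p + f q

namespace IsAlmostNormalizing

variable {R S : Type*} [Ring R] [Ring S] {f : R →+* S} {x : S}

theorem of_comp_injective {T : Type*} [Ring T] {g : S →+* T} (hg : Function.Injective g)
    (h : IsAlmostNormalizing (g.comp f) (g x)) : IsAlmostNormalizing f x where
  exists_mul_map r := by
    obtain ⟨p, q, e⟩ := h.exists_mul_map r
    exact ⟨p, q, hg (by simpa using e)⟩
  exists_map_mul r := by
    obtain ⟨p, q, e⟩ := h.exists_map_mul r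
    exact ⟨p, q, hg (by simpa using e)⟩

variable (f x) in
/-- The sums `∑ i < n, xⁱ rᵢ` with coefficients `rᵢ` in the image of `f`: elements of `x`-degree
less than `n`. The coefficients stand on the right, so that leading coefficients of left ideals of
`S` form left ideals of `R`. -/
def degreeLT (n : ℕ) : AddSubgroup S :=
  AddSubgroup.closure {y | ∃ i < n, ∃ r, x ^ i * f r = y}

theorem pow_mul_map_mem_degreeLT {i n : ℕ} (hi : i < n) (r : R) :
    x ^ i * f r ∈ degreeLT f x n :=
  AddSubgroup.subset_closure ⟨i, hi, r, rfl⟩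

theorem degreeLT_mono : Monotone (degreeLT f x) := fun _ _ hmn ↦
  AddSubgroup.closure_mono fun _ ⟨i, hi, hr⟩ ↦ ⟨i, hi.trans_le hmn, hr⟩

theorem map_mem_of_mem_degreeLT {G : Type*} [AddGroup G] {n : ℕ} {H : AddSubgroup G} (g : S →+ G)
    (hg : ∀ i < n, ∀ r, g (x ^ i * f r) ∈ H) {y : S} (hy : y ∈ degreeLT f x n) : g y ∈ H := by
  suffices degreeLT f x n ≤ H.comap g from this hy
  rw [degreeLT, AddSubgroup.closure_le]
  rintro _ ⟨i, hi, r, rfl⟩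
  exact hg i hi r

theorem degreeLT_zero : degreeLT f x 0 = ⊥ := by
  simp [degreeLT]

theorem exists_sub_mem_degreeLT {n : ℕ} {y : S} (hy : y ∈ degreeLT f x (n + 1)) :
    ∃ r, y - x ^ n * f r ∈ degreeLT f x n := by
  induction hy using AddSubgroup.closure_induction with
  | mem y h =>
    obtain ⟨i, hi, r, rfl⟩ := h
    rcases Nat.lt_succ_iff_lt_or_eq.mp hi with hi | rfl
    · exact ⟨0, by simpa using pow_mul_map_mem_degreeLT hi r⟩
    · exact ⟨r, by simp⟩
  | zero => exact ⟨0, by simp⟩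
  | add y z _ _ hy hz =>
    obtain ⟨r, hr⟩ := hy
    obtain ⟨s, hs⟩ := hz
    exact ⟨r + s, by simpa [mul_add, add_sub_add_comm] using add_mem hr hs⟩
  | neg y _ hy =>
    obtain ⟨r, hr⟩ := hy
    exact ⟨-r, by simpa [neg_add_eq_sub] using neg_mem hr⟩

theorem mul_map_mem_degreeLT {n : ℕ} {y : S} (hy : y ∈ degreeLT f x n) (r : R) :
    y * f r ∈ degreeLT f x n := by
  refine map_mem_of_mem_degreeLT (AddMonoidHom.mulRight (f r)) (fun i hi s ↦ ?_) hy
  rw [AddMonoidHom.mulRight_apply, mul_assoc, ← map_mul]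
  exact pow_mul_map_mem_degreeLT hi (s * r)

theorem self_mul_mem_degreeLT {n : ℕ} {y : S} (hy : y ∈ degreeLT f x n) :
    x * y ∈ degreeLT f x (n + 1) := by
  refine map_mem_of_mem_degreeLT (AddMonoidHom.mulLeft x) (fun i hi r ↦ ?_) hy
  simpa [mul_assoc, pow_succ'] using pow_mul_map_mem_degreeLT (Nat.succ_lt_succ hi) r

theorem map_mul_pow_mem_degreeLT (h : IsAlmostNormalizing f x) (n : ℕ) (r : R) :
    f r * x ^ n ∈ degreeLT f x (n + 1) := by
  induction n generalizing r with
  | zero => simpa using pow_mul_map_mem_degreeLT (x := x) Nat.zero_lt_one r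
  | succ n ih =>
    obtain ⟨p, q, hpq⟩ := h.exists_map_mul r
    rw [pow_succ', ← mul_assoc, hpq, add_mul, mul_assoc]
    exact add_mem (self_mul_mem_degreeLT (ih p)) (degreeLT_mono (Nat.le_succ _) (ih q))

theorem map_mul_mem_degreeLT (h : IsAlmostNormalizing f x) {n : ℕ} {y : S}
    (hy : y ∈ degreeLT f x n) (r : R) : f r * y ∈ degreeLT f x n := by
  refine map_mem_of_mem_degreeLT (AddMonoidHom.mulLeft (f r)) (fun i hi s ↦ ?_) hy
  rw [AddMonoidHom.coe_mulLeft, ← mul_assoc]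
  exact degreeLT_mono hi (mul_map_mem_degreeLT (h.map_mul_pow_mem_degreeLT i r) s)

theorem exists_map_mul_pow_sub_mem_degreeLT (h : IsAlmostNormalizing f x) (n : ℕ) (r : R) :
    ∃ s, f s * x ^ n - x ^ n * f r ∈ degreeLT f x n := by
  induction n with
  | zero => exact ⟨r, by simp⟩
  | succ n ih =>
    obtain ⟨s, hs⟩ := ih
    obtain ⟨p, q, hpq⟩ := h.exists_mul_map s
    have key : f p * x ^ (n + 1) - x ^ (n + 1) * f r =
        x * (f s * x ^ n - x ^ n * f r) - f q * x ^ n := by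
      rw [mul_sub, ← mul_assoc x (f s), hpq, pow_succ']
      noncomm_ring
    exact ⟨p, key ▸ sub_mem (self_mul_mem_degreeLT hs) (h.map_mul_pow_mem_degreeLT n q)⟩

/-- The left ideals of leading coefficients, in each degree `n`, of the elements of a left ideal `I`
of `S`. They increase with `n` because `I` is closed under left multiplication by `x`. -/
def leadingCoeffIdeal (h : IsAlmostNormalizing f x) (I : Ideal S) : ℕ →o Ideal R where
  toFun n :=
    { carrier := {r | ∃ y ∈ I, y - x ^ n * f r ∈ degreeLT f x n}
      zero_mem' := ⟨0, I.zero_mem, by simp⟩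
      add_mem' := by
        rintro r s ⟨y, hyI, hy⟩ ⟨z, hzI, hz⟩
        refine ⟨y + z, I.add_mem hyI hzI, ?_⟩
        simpa [mul_add, add_sub_add_comm] using add_mem hy hz
      smul_mem' := by
        rintro s r ⟨y, hyI, hy⟩
        obtain ⟨t, ht⟩ := h.exists_map_mul_pow_sub_mem_degreeLT n s
        have key : f t * y - x ^ n * f (s • r) =
            f t * (y - x ^ n * f r) + (f t * x ^ n - x ^ n * f s) * f r := by
          rw [smul_eq_mul, map_mul]
          noncomm_ring
        exact ⟨f t * y, I.mul_mem_left _ hyI,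
          key ▸ add_mem (h.map_mul_mem_degreeLT hy t) (mul_map_mem_degreeLT ht r)⟩ }
  monotone' := monotone_nat_of_le_succ fun n r ⟨y, hyI, hy⟩ ↦
    ⟨x * y, I.mul_mem_left x hyI, by
      simpa [mul_sub, pow_succ', mul_assoc] using self_mul_mem_degreeLT hy⟩

theorem leadingCoeffIdeal_mono (h : IsAlmostNormalizing f x) : Monotone h.leadingCoeffIdeal :=
  fun _ _ hIJ _ _ ⟨y, hyI, hy⟩ ↦ ⟨y, hIJ hyI, hy⟩

theorem mem_of_leadingCoeffIdeal_le (h : IsAlmostNormalizing f x) {I J : Ideal S} (hIJ : I ≤ J)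
    (hlead : h.leadingCoeffIdeal J ≤ h.leadingCoeffIdeal I) {n : ℕ} {y : S} (hyJ : y ∈ J)
    (hy : y ∈ degreeLT f x n) : y ∈ I := by
  induction n generalizing y with
  | zero =>
    rw [degreeLT_zero, AddSubgroup.mem_bot] at hy
    exact hy ▸ I.zero_mem
  | succ n ih =>
    obtain ⟨r, hr⟩ := exists_sub_mem_degreeLT hy
    obtain ⟨z, hzI, hz⟩ := hlead n ⟨y, hyJ, hr⟩
    have hyz : y - z ∈ degreeLT f x n := by simpa using sub_mem hr hz
    have hyzI : y - z ∈ I := ih (J.sub_mem hyJ (hIJ hzI)) hyz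
    simpa using I.add_mem hyzI hzI

theorem exists_mem_degreeLT (h : IsAlmostNormalizing f x)
    (hgen : Subring.closure (insert x (Set.range f)) = ⊤) (y : S) :
    ∃ n, y ∈ degreeLT f x n := by
  have mem_iSup {z : S} : z ∈ ⨆ n, degreeLT f x n ↔ ∃ n, z ∈ degreeLT f x n :=
    AddSubgroup.mem_iSup_of_directed degreeLT_mono.directed_le
  have mul_mem_iSup (s : S) (hs : s ∈ Subring.closure (insert x (Set.range f))) :
      ∀ z ∈ ⨆ n, degreeLT f x n, s * z ∈ ⨆ n, degreeLT f x n := by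
    induction hs using Subring.closure_induction with
    | mem s hs =>
      intro z hz
      obtain ⟨n, hn⟩ := mem_iSup.mp hz
      rcases hs with rfl | ⟨r, rfl⟩
      · exact mem_iSup.mpr ⟨n + 1, self_mul_mem_degreeLT hn⟩
      · exact mem_iSup.mpr ⟨n, h.map_mul_mem_degreeLT hn r⟩
    | zero => simp
    | one => simp
    | add s t _ _ hs ht => exact fun z hz ↦ add_mul s t z ▸ add_mem (hs z hz) (ht z hz)
    | neg s _ hs => exact fun z hz ↦ neg_mul s z ▸ neg_mem (hs z hz)
    | mul s t _ _ hs ht => exact fun z hz ↦ mul_assoc s t z ▸ hs _ (ht z hz)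
  have one_mem_iSup : (1 : S) ∈ ⨆ n, degreeLT f x n :=
    mem_iSup.mpr ⟨1, by simpa using pow_mul_map_mem_degreeLT (f := f) (x := x) Nat.zero_lt_one 1⟩
  exact mem_iSup.mp (mul_one y ▸ mul_mem_iSup y (hgen ▸ Subring.mem_top y) 1 one_mem_iSup)

theorem isNoetherianRing [IsNoetherianRing R] (h : IsAlmostNormalizing f x)
    (hgen : Subring.closure (insert x (Set.range f)) = ⊤) : IsNoetherianRing S := by
  have : WellFoundedGT (ℕ →o Ideal R) := wellFoundedGT_nat_orderHom
  have strictMono : StrictMono h.leadingCoeffIdeal := fun I J hIJ ↦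
    (h.leadingCoeffIdeal_mono hIJ.le).lt_of_not_ge fun hlead ↦ hIJ.not_ge fun y hyJ ↦
      have ⟨_, hy⟩ := h.exists_mem_degreeLT hgen y
      h.mem_of_leadingCoeffIdeal_le hIJ.le hlead hyJ hy
  exact isNoetherian_iff'.mpr strictMono.wellFoundedGT

end IsAlmostNormalizing

/-! ### Noetherian subalgebras generated by finitely many elements -/

section Adjoin

open Algebra MulOpposite

variable {P S : Type*} [CommRing P] [Ring S] [Algebra P S] {s : Set S} {x : S}

open scoped IsMulCommutative in
theorem isNoetherianRing_adjoin_of_commute [IsNoetherianRing P] (hs : s.Finite)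
    (hcomm : ∀ a ∈ s, ∀ b ∈ s, a * b = b * a) : IsNoetherianRing (adjoin P s) := by
  have := isMulCommutative_adjoin P hcomm
  have : FiniteType P (adjoin P s) :=
    (adjoin P s).fg_iff_finiteType.mp (Subalgebra.fg_def.mpr ⟨s, hs, rfl⟩)
  exact FiniteType.isNoetherianRing P (adjoin P s)

theorem exists_self_mul_eq_of_mem_adjoin
    (hs : ∀ r ∈ s, ∃ p ∈ adjoin P s, ∃ q ∈ adjoin P s, x * r = p * x + q) {r : S}
    (hr : r ∈ adjoin P s) : ∃ p ∈ adjoin P s, ∃ q ∈ adjoin P s, x * r = p * x + q := by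
  induction hr using adjoin_induction with
  | mem r hr => exact hs r hr
  | algebraMap c =>
    exact ⟨algebraMap P S c, Subalgebra.algebraMap_mem _ c, 0, zero_mem _, by simp [commutes]⟩
  | add r t _ _ hr ht =>
    obtain ⟨p, hp, q, hq, e⟩ := hr
    obtain ⟨p', hp', q', hq', e'⟩ := ht
    refine ⟨p + p', add_mem hp hp', q + q', add_mem hq hq', ?_⟩
    rw [mul_add, e, e', add_mul, add_add_add_comm]
  | mul r t _ ht' hr ht =>
    obtain ⟨p, hp, q, hq, e⟩ := hr
    obtain ⟨p', hp', q', hq', e'⟩ := ht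
    refine ⟨p * p', mul_mem hp hp', p * q' + q * t, add_mem (mul_mem hp hq') (mul_mem hq ht'), ?_⟩
    rw [← mul_assoc, e, add_mul, mul_assoc p, e']
    noncomm_ring

theorem op_mem_adjoin_preimage_unop {r : S} :
    op r ∈ adjoin P (unop ⁻¹' s) ↔ r ∈ adjoin P s := by
  rw [← Subalgebra.op_adjoin, Subalgebra.mem_op, unop_op]

theorem exists_mul_self_eq_of_mem_adjoin
    (hs : ∀ r ∈ s, ∃ p ∈ adjoin P s, ∃ q ∈ adjoin P s, r * x = x * p + q) {r : S}
    (hr : r ∈ adjoin P s) : ∃ p ∈ adjoin P s, ∃ q ∈ adjoin P s, r * x = x * p + q := by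
  have hs_op : ∀ r ∈ unop ⁻¹' s, ∃ p ∈ adjoin P (unop ⁻¹' s), ∃ q ∈ adjoin P (unop ⁻¹' s),
      op x * r = p * op x + q := fun r hr ↦
    have ⟨p, hp, q, hq, e⟩ := hs (unop r) hr
    ⟨op p, op_mem_adjoin_preimage_unop.mpr hp, op q, op_mem_adjoin_preimage_unop.mpr hq,
      congrArg op e⟩
  obtain ⟨p, hp, q, hq, e⟩ :=
    exists_self_mul_eq_of_mem_adjoin hs_op (op_mem_adjoin_preimage_unop.mpr hr)
  exact ⟨unop p, op_mem_adjoin_preimage_unop.mp hp, unop q, op_mem_adjoin_preimage_unop.mp hq,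
    congrArg unop e⟩

theorem isAlmostNormalizing_adjoin
    (hleft : ∀ r ∈ s, ∃ p ∈ adjoin P s, ∃ q ∈ adjoin P s, x * r = p * x + q)
    (hright : ∀ r ∈ s, ∃ p ∈ adjoin P s, ∃ q ∈ adjoin P s, r * x = x * p + q) :
    IsAlmostNormalizing ((adjoin P s).val : adjoin P s →+* S) x where
  exists_mul_map r :=
    have ⟨p, hp, q, hq, e⟩ := exists_self_mul_eq_of_mem_adjoin hleft r.2
    ⟨⟨p, hp⟩, ⟨q, hq⟩, e⟩
  exists_map_mul r :=
    have ⟨p, hp, q, hq, e⟩ := exists_mul_self_eq_of_mem_adjoin hright r.2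
    ⟨⟨p, hp⟩, ⟨q, hq⟩, e⟩

theorem isNoetherianRing_adjoin_insert [IsNoetherianRing (adjoin P s)]
    (h : IsAlmostNormalizing ((adjoin P s).val : adjoin P s →+* S) x) :
    IsNoetherianRing (adjoin P (insert x s)) := by
  let incl := Subalgebra.inclusion (adjoin_mono (R := P) (Set.subset_insert x s))
  let x' : adjoin P (insert x s) := ⟨x, subset_adjoin (Set.mem_insert x s)⟩
  have hx' : IsAlmostNormalizing (incl : adjoin P s →+* adjoin P (insert x s)) x' :=
    .of_comp_injective (g := ((adjoin P (insert x s)).val : _ →+* S)) Subtype.val_injective h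
  refine hx'.isNoetherianRing ?_
  rw [_root_.eq_top_iff, ← top_toSubring (R := P), ← adjoin_adjoin_coe_preimage,
    adjoin_eq_ring_closure]
  refine Subring.closure_mono (Set.union_subset ?_ ?_)
  · rintro _ ⟨c, rfl⟩
    exact .inr ⟨algebraMap P _ c, incl.commutes c⟩
  · rintro y (hyx | hys)
    · exact .inl (Subtype.ext hyx)
    · exact .inr ⟨⟨y, subset_adjoin hys⟩, rfl⟩

theorem smul_add_smul_add_smul_one_mem {B : Subalgebra P S} {y : S} (hx : x ∈ B) (hy : y ∈ B)
    (a b c : P) : a • x + b • y + c • 1 ∈ B :=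
  add_mem (add_mem (B.smul_mem hx a) (B.smul_mem hy b)) (B.smul_mem B.one_mem c)

theorem smul_sub_smul_sub_smul_one_mem {B : Subalgebra P S} {y : S} (hx : x ∈ B) (hy : y ∈ B)
    (a b c : P) : b • (x - a • y - c • 1) ∈ B :=
  B.smul_mem (sub_mem (sub_mem hx (B.smul_mem hy a)) (B.smul_mem B.one_mem c)) b

end Adjoin

/-! ### Down-up relations -/

/-- The defining relations of a down-up algebra with parameters `a`, `b`, `c`, for elements `u` (up)
and `d` (down) of an arbitrary algebra. -/
structure IsDownUpPair_s7 {P S : Type*} [CommRing P] [Ring S] [Algebra P S] (a b c : P) (u d : S) :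
    Prop where
  ddu : d * d * u = a • (d * u * d) + b • (u * d * d) + c • d
  duu : d * u * u = a • (u * d * u) + b • (u * u * d) + c • u

namespace IsDownUpPair_s7

open Algebra MulOpposite

variable {P S : Type*} [CommRing P] [Ring S] [Algebra P S] {a c : P} {u d : S}

theorem op {b : P} (h : IsDownUpPair_s7 a b c u d) : IsDownUpPair_s7 a b c (op d) (op u) where
  ddu := unop_injective (by simpa [mul_assoc] using h.duu)
  duu := unop_injective (by simpa [mul_assoc] using h.ddu)

theorem commute {b : P} (h : IsDownUpPair_s7 a b c u d) : Commute (u * d) (d * u) :=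
  calc u * d * (d * u) = u * (d * d * u) := by noncomm_ring
    _ = d * u * u * d := by
      rw [h.ddu, h.duu]
      simp only [add_mul, mul_add, smul_mul_assoc, mul_smul_comm, mul_assoc]
    _ = d * u * (u * d) := by noncomm_ring

theorem down_mul_down_mul_up {b : P} (h : IsDownUpPair_s7 a b c u d) :
    d * (d * u) = (a • (d * u) + b • (u * d) + c • 1) * d := by
  simp only [← mul_assoc, h.ddu, add_mul, smul_mul_assoc, one_mul]

theorem down_mul_up_mul_up {b : P} (h : IsDownUpPair_s7 a b c u d) :
    d * u * u = u * (a • (d * u) + b • (u * d) + c • 1) :=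
  congrArg unop h.op.down_mul_down_mul_up

theorem up_mul_down_mul_down {b : Pˣ} (h : IsDownUpPair_s7 a b c u d) :
    u * d * d = d * ((↑b⁻¹ : P) • (d * u - a • (u * d) - c • 1)) := by
  have hb : d * (d * u - a • (u * d) - c • 1) = (b : P) • (u * d * d) := by
    simp only [mul_sub, mul_smul_comm, mul_one, ← mul_assoc, h.ddu]
    abel
  rw [mul_smul_comm, hb, smul_smul, Units.inv_mul, one_smul]

theorem up_mul_up_mul_down {b : Pˣ} (h : IsDownUpPair_s7 a b c u d) :
    u * (u * d) = (↑b⁻¹ : P) • (d * u - a • (u * d) - c • 1) * u :=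
  congrArg unop h.op.up_mul_down_mul_down

theorem isNoetherianRing_adjoin_ud_du [IsNoetherianRing P] {b : P}
    (h : IsDownUpPair_s7 a b c u d) : IsNoetherianRing (adjoin P {u * d, d * u}) := by
  refine isNoetherianRing_adjoin_of_commute (Set.toFinite _) ?_
  rintro _ (rfl | rfl) _ (rfl | rfl)
  exacts [rfl, h.commute, h.commute.symm, rfl]

theorem isAlmostNormalizing_down {b : Pˣ} (h : IsDownUpPair_s7 a b c u d) :
    IsAlmostNormalizing ((adjoin P {u * d, d * u}).val : adjoin P {u * d, d * u} →+* S) d := by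
  have hud : u * d ∈ adjoin P {u * d, d * u} := subset_adjoin (by simp)
  have hdu : d * u ∈ adjoin P {u * d, d * u} := subset_adjoin (by simp)
  refine isAlmostNormalizing_adjoin ?_ ?_
  · rintro _ (rfl | rfl)
    · exact ⟨_, hdu, 0, zero_mem _, by noncomm_ring⟩
    · exact ⟨_, smul_add_smul_add_smul_one_mem hdu hud a b c, 0, zero_mem _, by
        rw [add_zero, h.down_mul_down_mul_up]⟩
  · rintro _ (rfl | rfl)
    · exact ⟨_, smul_sub_smul_sub_smul_one_mem hdu hud a _ c, 0, zero_mem _, by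
        rw [add_zero, h.up_mul_down_mul_down]⟩
    · exact ⟨_, hud, 0, zero_mem _, by noncomm_ring⟩

theorem isAlmostNormalizing_up {b : Pˣ} (h : IsDownUpPair_s7 a b c u d) :
    IsAlmostNormalizing
      ((adjoin P {d, u * d, d * u}).val : adjoin P {d, u * d, d * u} →+* S) u := by
  have hud : u * d ∈ adjoin P {d, u * d, d * u} := subset_adjoin (by simp)
  have hdu : d * u ∈ adjoin P {d, u * d, d * u} := subset_adjoin (by simp)
  refine isAlmostNormalizing_adjoin ?_ ?_
  · rintro _ (rfl | rfl | rfl)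
    · exact ⟨0, zero_mem _, _, hud, by simp⟩
    · exact ⟨_, smul_sub_smul_sub_smul_one_mem hdu hud a _ c, 0, zero_mem _, by
        rw [add_zero, h.up_mul_up_mul_down]⟩
    · exact ⟨_, hud, 0, zero_mem _, by noncomm_ring⟩
  · rintro _ (rfl | rfl | rfl)
    · exact ⟨0, zero_mem _, _, hdu, by simp⟩
    · exact ⟨_, hdu, 0, zero_mem _, by noncomm_ring⟩
    · exact ⟨_, smul_add_smul_add_smul_one_mem hdu hud a b c, 0, zero_mem _, by
        rw [add_zero, h.down_mul_up_mul_up]⟩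

theorem isNoetherianRing [IsNoetherianRing P] {b : P} (h : IsDownUpPair_s7 a b c u d) (hb : IsUnit b)
    (hgen : adjoin P {u, d} = ⊤) : IsNoetherianRing S := by
  obtain ⟨b, rfl⟩ := hb
  have := h.isNoetherianRing_adjoin_ud_du
  have := isNoetherianRing_adjoin_insert h.isAlmostNormalizing_down
  have hnoeth := isNoetherianRing_adjoin_insert h.isAlmostNormalizing_up
  have htop : adjoin P {u, d, u * d, d * u} = ⊤ :=
    top_le_iff.mp (hgen ▸ adjoin_mono (by grind))
  rw [htop] at hnoeth
  exact isNoetherianRing_of_ringEquiv _ (Subalgebra.topEquiv (R := P)).toRingEquiv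

end IsDownUpPair_s7

open Algebra MulOpposite in
theorem downUp_noetherian_general {P S : Type*} [CommRing P] [IsNoetherianRing P] [Ring S]
    [Algebra P S] {a b c : P} {u d : S} (h : IsDownUpPair_s7 a b c u d) (hb : IsUnit b)
    (hgen : adjoin P {u, d} = ⊤) : IsNoetherianRing S ∧ IsNoetherianRing Sᵐᵒᵖ := by
  have hgen_op : adjoin P {op d, op u} = ⊤ := by
    have hpair : ({op d, op u} : Set Sᵐᵒᵖ) = unop ⁻¹' {u, d} := by
      ext y
      simp [← unop_inj, or_comm]
    rw [hpair, ← Subalgebra.op_adjoin, hgen, Subalgebra.op_top]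
  exact ⟨h.isNoetherianRing hb hgen, h.op.isNoetherianRing hb hgen_op⟩

namespace DownUp

variable {K : Type} [Field K] {n : ℕ} (α β : K) (φ : MvPolynomial (Fin n) K)

theorem mkAlgHom_uF : RingQuot.mkAlgHom (MvPolynomial (Fin n) K) (Rel α β φ) uF = U α β φ := by
  simp [U, RingQuot.mkAlgHom]

theorem mkAlgHom_dF : RingQuot.mkAlgHom (MvPolynomial (Fin n) K) (Rel α β φ) dF = D α β φ := by
  simp [D, RingQuot.mkAlgHom]

theorem isDownUpPair_U_D : IsDownUpPair_s7 (C α) (C β) φ (U α β φ) (D α β φ) := by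
  have hC (k : K) (y : F K n) : (C k : MvPolynomial (Fin n) K) • y = k • y := by
    rw [← MvPolynomial.algebraMap_eq, algebraMap_smul]
  refine ⟨?_, ?_⟩
  · simpa only [← hC, ← Algebra.smul_def, map_add, map_smul, map_mul, mkAlgHom_uF, mkAlgHom_dF]
      using RingQuot.mkAlgHom_rel (MvPolynomial (Fin n) K) (Rel.ddu (α := α) (β := β) (φ := φ))
  · simpa only [← hC, ← Algebra.commutes, ← Algebra.smul_def, map_add, map_smul, map_mul,
      mkAlgHom_uF, mkAlgHom_dF]
      using RingQuot.mkAlgHom_rel (MvPolynomial (Fin n) K) (Rel.duu (α := α) (β := β) (φ := φ))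

theorem adjoin_U_D_eq_top : Algebra.adjoin (MvPolynomial (Fin n) K) {U α β φ, D α β φ} = ⊤ := by
  have hrange : ({uF, dF} : Set (F K n)) = Set.range (FreeAlgebra.ι _) := by
    ext y
    constructor
    · rintro (rfl | rfl)
      exacts [⟨Gen.u, rfl⟩, ⟨Gen.d, rfl⟩]
    · rintro ⟨_ | _, rfl⟩
      exacts [.inl rfl, .inr rfl]
  rw [← mkAlgHom_uF, ← mkAlgHom_dF, ← Set.image_pair, ← AlgHom.map_adjoin, hrange,
    FreeAlgebra.adjoin_range_ι, Algebra.map_top, AlgHom.range_eq_top]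
  exact RingQuot.mkAlgHom_surjective _ _

end DownUp

open DownUp in
/-- If β ≠ 0, the down-up algebra A(α,β,φ) over K[t₁,…,tₙ] is left and right
noetherian. -/
theorem downUp_noetherian {K : Type} [Field K] {n : ℕ}
    (α β : K) (hβ : β ≠ 0) (φ : MvPolynomial (Fin n) K) :
    IsNoetherianRing (A α β φ) ∧ IsNoetherianRing (A α β φ)ᵐᵒᵖ :=
  downUp_noetherian_general (isDownUpPair_U_D α β φ) (hβ.isUnit.map C) (adjoin_U_D_eq_top α β φ)
end
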